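/- arXiv:2411.03508 — 8 statements merged into one kernel-verified Lean document; each statement's English description precedes it below -/
import Mathlib

section
/- Let P = (a,c) be a K-point of the affine curve y^d = f(x) (so c^d = f(a)), and suppose that m > 1 is the least positive integer such that m_P^m is a principal ideal of A (i.e., P is a torsion point of order m on the Jacobian of the smooth projective model). Then either m = d or m ≥ n. -/
open Polynomial

/-- The affine coordinate ring `A = K[X,Y]/(Y^d − f(X))` of the curve `y^d = f(x)`,
realized as `AdjoinRoot` of the polynomial `Y^d - f(X)` over `K[X]`. -/
noncomputable abbrev CurveRing (K : Type*) [Field K] (d : ℕ) (f : K[X]) : Type _ :=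
  AdjoinRoot ((X : K[X][X]) ^ d - C f)

/-- The maximal ideal `m_{(a,c)} = (X - a, Y - c)` of the coordinate ring. -/
noncomputable def ptIdeal {K : Type*} [Field K] (d : ℕ) (f : K[X]) (a c : K) :
    Ideal (CurveRing K d f) :=
  Ideal.span {AdjoinRoot.of _ (X - C a), AdjoinRoot.root _ - AdjoinRoot.of _ (C c)}

/-- `P = (a,c)` is a torsion point of order `m` on the Jacobian: `m` is the least
positive integer such that `m_P ^ m` is a principal ideal of `A`. -/
def IsTorsionOfOrder {K : Type*} [Field K] (d : ℕ) (f : K[X]) (a c : K) (m : ℕ) : Prop :=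
  IsLeast {k : ℕ | 0 < k ∧ (ptIdeal d f a c ^ k).IsPrincipal} m

lemma det_deg_aux {K : Type*} [Field K] {d : ℕ} (M : Matrix (Fin d) (Fin d) K[X])
    (τ : Equiv.Perm (Fin d)) (w : Fin d → ℕ) (D W : ℕ) (hD : 0 < D)
    (h1 : ∀ j, M (τ j) j ≠ 0 ∧ D * (M (τ j) j).natDegree + w (τ j) = W + w j)
    (h2 : ∀ i j, i ≠ τ j → M i j ≠ 0 → D * (M i j).natDegree + w i < W + w j) :
    W * d ≤ D * M.det.natDegree := by
  have hperm : ∀ σ : Equiv.Perm (Fin d), ∑ j, w (σ j) = ∑ j, w j := fun σ => Equiv.sum_comp σ w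
  set N := ∑ j, (M (τ j) j).natDegree with hN
  have hDN : D * N = W * d := by
    have : ∑ j, (D * (M (τ j) j).natDegree + w (τ j)) = ∑ j, (W + w j) :=
      Finset.sum_congr rfl fun j _ => (h1 j).2
    rw [Finset.sum_add_distrib, Finset.sum_add_distrib, hperm, ← Finset.mul_sum] at this
    simp at this
    rw [hN, this, mul_comm]
  have hc : M.det.coeff N ≠ 0 := by
    rw [Matrix.det_apply, finsetSum_coeff, Finset.sum_eq_single τ]
    · have hp : (∏ j, M (τ j) j).coeff N ≠ 0 := by
        have : (∏ j, M (τ j) j).natDegree = N := natDegree_prod _ _ fun j _ => (h1 j).1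
        rw [← this, coeff_natDegree]
        exact leadingCoeff_ne_zero.2 (Finset.prod_ne_zero_iff.2 fun j _ => (h1 j).1)
      rcases Int.units_eq_one_or (Equiv.Perm.sign τ) with h | h <;> rw [h] <;> simpa using hp
    · intro σ _ hσ
      have hp : (∏ j, M (σ j) j).coeff N = 0 := by
        by_cases h0 : ∀ j, M (σ j) j ≠ 0
        · apply coeff_eq_zero_of_natDegree_lt
          rw [natDegree_prod _ _ fun j _ => h0 j]
          have hlt : ∑ j, (D * (M (σ j) j).natDegree + w (σ j)) < ∑ j, (W + w j) := by
            obtain ⟨j0, hj0⟩ : ∃ j, σ j ≠ τ j := by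
              by_contra! h; exact hσ (Equiv.ext h)
            refine Finset.sum_lt_sum (fun j _ => ?_) ⟨j0, Finset.mem_univ _, h2 _ _ hj0 (h0 _)⟩
            by_cases h : σ j = τ j
            · rw [h]; exact (h1 j).2.le
            · exact (h2 _ _ h (h0 _)).le
          rw [Finset.sum_add_distrib, Finset.sum_add_distrib, hperm, ← Finset.mul_sum] at hlt
          simp at hlt
          rw [mul_comm d W, ← hDN] at hlt
          exact lt_of_mul_lt_mul_left hlt (Nat.zero_le _)
        · push Not at h0
          obtain ⟨j, hj⟩ := h0
          rw [Finset.prod_eq_zero (f := fun j => M (σ j) j) (Finset.mem_univ j) hj, coeff_zero]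
      rcases Int.units_eq_one_or (Equiv.Perm.sign σ) with h | h <;> rw [h] <;> simpa using hp
    · simp
  rw [← hDN]
  exact Nat.mul_le_mul_left _ (le_natDegree_of_ne_zero hc)

lemma finrank_pow_aux {K A : Type*} [Field K] [CommRing A] [IsDedekindDomain A] [Algebra K A]
    (P : Ideal A) [P.IsPrime] (hP : P ≠ ⊥)
    (hs : ∀ z : A, ∃ k : K, z - algebraMap K A k ∈ P) (m : ℕ) :
    Module.finrank K (A ⧸ P ^ m) ≤ m := by
  have hne : P ≠ ⊤ := Ideal.IsPrime.ne_top inferInstance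
  have ha : ∀ i : ℕ, ∃ x ∈ P ^ i, x ∉ P ^ (i + 1) := fun i =>
    Ideal.exists_mem_pow_notMem_pow_succ P hP hne i
  choose x hx hx' using ha
  have key : ∀ m : ℕ, ∀ z : A, ∃ k : ℕ → K,
      z - ∑ i ∈ Finset.range m, k i • x i ∈ P ^ m := by
    intro m
    induction m with
    | zero => intro z; exact ⟨0, by simp⟩
    | succ m ih =>
      intro z
      obtain ⟨k, hk⟩ := ih z
      obtain ⟨u, e, he, hue⟩ := Ideal.exists_mul_add_mem_pow_succ hP (x m) _ (hx m) (hx' m) hk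
      obtain ⟨l, hl⟩ := hs u
      refine ⟨Function.update k m l, ?_⟩
      rw [Finset.sum_range_succ, Function.update_self, Finset.sum_congr rfl
        (g := fun i => k i • x i) (fun i hi => by
          rw [Function.update_of_ne (Finset.mem_range.1 hi).ne])]
      have : z - (∑ i ∈ Finset.range m, k i • x i + l • x m)
          = x m * (u - algebraMap K A l) + e := by
        rw [Algebra.smul_def]
        linear_combination -hue
      rw [this, pow_succ]
      exact Ideal.add_mem _ (Ideal.mul_mem_mul (hx m) hl) (by rwa [← pow_succ])
  have : (⊤ : Submodule K (A ⧸ P ^ m)) ≤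
      Submodule.span K (Set.range fun i : Fin m => Ideal.Quotient.mk (P ^ m) (x i)) := by
    rintro q -
    obtain ⟨z, rfl⟩ := Ideal.Quotient.mk_surjective q
    obtain ⟨k, hk⟩ := key m z
    rw [(Ideal.Quotient.mk_eq_mk_iff_sub_mem _ _).2 hk, map_sum, Finset.sum_range]
    refine Submodule.sum_mem _ fun i _ => ?_
    have : Ideal.Quotient.mk (P ^ m) (k i • x i) = k i • Ideal.Quotient.mk (P ^ m) (x i) := rfl
    rw [this]
    exact Submodule.smul_mem _ _ (Submodule.subset_span ⟨i, rfl⟩)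
  simpa using finrank_le_of_span_eq_top (top_le_iff.1 this)

/-- degree lemma -/
lemma norm_aux {K : Type*} [Field K] {A : Type*} [CommRing A] [Algebra K[X] A] (d n : ℕ) [NeZero d]
    (hgcd : Nat.gcd n d = 1) (f : K[X]) (hmonic : f.Monic) (hdeg : f.natDegree = n)
    (y : A) (hy : y ^ d = algebraMap K[X] A f) (b : Module.Basis (Fin d) K[X] A)
    (hb : ∀ i, b i = y ^ (i : ℕ)) (g : A) (k : Fin d) (hk : b.repr g k ≠ 0) :
    d * (b.repr g k).natDegree + n * k ≤ (Algebra.norm K[X] g).natDegree := by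
  classical
  have hd : 0 < d := Nat.pos_of_ne_zero (NeZero.ne d)
  set G : Fin d → K[X] := fun i => b.repr g i with hG
  have hf0 : f ≠ 0 := hmonic.ne_zero
  obtain ⟨k0, hk0, hmax⟩ := Finset.exists_max_image (Finset.univ.filter fun i => G i ≠ 0)
    (fun i => d * (G i).natDegree + n * (i : ℕ)) ⟨k, by simpa using hk⟩
  have hk0' : G k0 ≠ 0 := by simpa using hk0
  have hstrict : ∀ i, i ≠ k0 → G i ≠ 0 →
      d * (G i).natDegree + n * (i : ℕ) < d * (G k0).natDegree + n * (k0 : ℕ) := by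
    intro i hi h0
    refine lt_of_le_of_ne (hmax i (by simpa using h0)) fun h => hi ?_
    have hmod : n * (i : ℕ) ≡ n * (k0 : ℕ) [MOD d] := by
      have : (d * (G i).natDegree + n * (i : ℕ)) % d = (d * (G k0).natDegree + n * (k0 : ℕ)) % d := by
        rw [h]
      simpa [Nat.ModEq] using this
    have := Nat.ModEq.cancel_left_of_coprime (by rw [Nat.gcd_comm]; exact hgcd) hmod
    exact Fin.ext (Nat.ModEq.eq_of_lt_of_lt this i.2 k0.2)
  refine (hmax k (by simpa using hk)).trans ?_
  rw [Algebra.norm_eq_matrix_det b]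
  have hg : g = ∑ i, G i • b i := (b.sum_repr g).symm
  have hM : ∀ i j : Fin d, Algebra.leftMulMatrix b g i j
      = G (i - j) * f ^ (((i - j : Fin d) + j : ℕ) / d) := by
    intro i j
    have h1 : g * b j = ∑ i : Fin d, (G (i - j) * f ^ (((i - j : Fin d) + j : ℕ) / d)) • b i := by
      rw [← Equiv.sum_comp (Equiv.addRight j)]
      conv_lhs => rw [hg, Finset.sum_mul]
      refine Finset.sum_congr rfl fun i _ => ?_
      simp only [Equiv.coe_addRight, add_sub_cancel_right]
      rw [hb, hb, hb, Algebra.smul_def, Algebra.smul_def, map_mul, map_pow, ← hy, mul_assoc,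
        mul_assoc, ← pow_add, ← pow_mul, ← pow_add, Fin.val_add, Nat.div_add_mod]
    rw [Algebra.leftMulMatrix_eq_repr_mul, h1, b.repr_sum_self]
  have hw : ∀ i j : Fin d, G (i - j) ≠ 0 →
      d * (Algebra.leftMulMatrix b g i j).natDegree + n * (i : ℕ) =
       (d * (G (i - j)).natDegree + n * ((i - j : Fin d) : ℕ)) + n * (j : ℕ) := by
    intro i j h0
    rw [hM, natDegree_mul h0 (pow_ne_zero _ hf0), natDegree_pow, hdeg]
    have h2 : (i : ℕ) = (((i - j : Fin d) : ℕ) + (j : ℕ)) % d := by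
      rw [← Fin.val_add, sub_add_cancel]
    have h3 := Nat.div_add_mod (((i - j : Fin d) : ℕ) + (j : ℕ)) d
    rw [← h2] at h3
    linear_combination n * h3
  have := det_deg_aux (Algebra.leftMulMatrix b g) (Equiv.addLeft k0) (fun i => n * (i : ℕ)) d
    (d * (G k0).natDegree + n * (k0 : ℕ)) hd ?_ ?_
  · rw [mul_comm] at this
    exact le_of_mul_le_mul_left this hd
  · intro j
    have e : k0 + j - j = k0 := add_sub_cancel_right _ _
    refine ⟨?_, ?_⟩
    · rw [hM]
      simp only [Equiv.coe_addLeft, e]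
      exact mul_ne_zero hk0' (pow_ne_zero _ hf0)
    · have := hw (k0 + j) j (by rwa [e])
      rw [e] at this
      exact this
  · intro i j hij h0
    have hne : i - j ≠ k0 := by
      rintro rfl; exact hij (by simp)
    have hG0 : G (i - j) ≠ 0 := by
      intro h; rw [hM, h, zero_mul] at h0; exact h0 rfl
    rw [hw i j hG0]
    exact Nat.add_lt_add_right (hstrict _ hne hG0) _

lemma pt_sub_mem {K : Type*} [Field K] (d : ℕ) (f : K[X]) (a c : K) (z : CurveRing K d f) :
    ∃ k : K, z - algebraMap K (CurveRing K d f) k ∈ ptIdeal d f a c := by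
  obtain ⟨p, rfl⟩ := AdjoinRoot.mk_surjective z
  refine ⟨(p.eval (C c)).eval a, ?_⟩
  have e1 : AdjoinRoot.mk (X ^ d - C f) p - AdjoinRoot.of _ (p.eval (C c)) ∈ ptIdeal d f a c := by
    obtain ⟨q, hq⟩ := X_sub_C_dvd_sub_C_eval (p := p) (a := C c)
    have : AdjoinRoot.mk (X ^ d - C f) p - AdjoinRoot.of _ (p.eval (C c))
       = (AdjoinRoot.root _ - AdjoinRoot.of _ (C c)) * AdjoinRoot.mk (X ^ d - C f) q := by
      have := congrArg (AdjoinRoot.mk (X ^ d - C f)) hq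
      simpa using this
    rw [this]
    exact Ideal.mul_mem_right _ _ (Ideal.subset_span (by simp))
  have e2 : AdjoinRoot.of (X ^ d - C f) (p.eval (C c))
      - AdjoinRoot.of _ (C ((p.eval (C c)).eval a)) ∈ ptIdeal d f a c := by
    obtain ⟨q, hq⟩ := X_sub_C_dvd_sub_C_eval (p := p.eval (C c)) (a := a)
    rw [← map_sub, hq, map_mul]
    exact Ideal.mul_mem_right _ _ (Ideal.subset_span (by simp))
  have := Ideal.add_mem _ e1 e2
  rw [sub_add_sub_cancel] at this
  exact this

/-- evaluation at a point -/
noncomputable def ptEval {K : Type*} [Field K] (d : ℕ) (f : K[X]) (a c : K)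
    (hP : c ^ d = f.eval a) : CurveRing K d f →+* K :=
  AdjoinRoot.lift (evalRingHom a) c (by simp [hP])

lemma ptEval_of {K : Type*} [Field K] (d : ℕ) (f : K[X]) (a c : K)
    (hP : c ^ d = f.eval a) (p : K[X]) : ptEval d f a c hP (AdjoinRoot.of _ p) = p.eval a := by
  simp [ptEval]

lemma ptEval_root {K : Type*} [Field K] (d : ℕ) (f : K[X]) (a c : K)
    (hP : c ^ d = f.eval a) : ptEval d f a c hP (AdjoinRoot.root _) = c := by
  simp [ptEval]

lemma ptIdeal_eq_ker {K : Type*} [Field K] (d : ℕ) (f : K[X]) (a c : K)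
    (hP : c ^ d = f.eval a) : ptIdeal d f a c = RingHom.ker (ptEval d f a c hP) := by
  have hle : ptIdeal d f a c ≤ RingHom.ker (ptEval d f a c hP) := by
    rw [ptIdeal, Ideal.span_le]
    rintro z (rfl | rfl)
    · simp [RingHom.mem_ker, ptEval_of, -map_sub]
    · simp [RingHom.mem_ker, map_sub, ptEval_of, ptEval_root]
  refine le_antisymm hle fun z hz => ?_
  obtain ⟨k, hk⟩ := pt_sub_mem d f a c z
  have h1 := hle hk
  rw [RingHom.mem_ker] at hz
  have h3 : ptEval d f a c hP (algebraMap K (CurveRing K d f) k) = k := by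
    have := ptEval_of d f a c hP (C k)
    rw [eval_C] at this
    exact this
  rw [RingHom.mem_ker, map_sub, hz, h3, zero_sub, neg_eq_zero] at h1
  rw [h1, map_zero, sub_zero] at hk
  exact hk

lemma ram_principal {K : Type*} [Field K] (d : ℕ) (f : K[X]) (hsqf : Squarefree f)
    (a : K) (h0 : f.eval a = 0) : (ptIdeal d f a 0 ^ d).IsPrincipal := by
  refine ⟨⟨AdjoinRoot.of _ (X - C a), ?_⟩⟩
  rw [Ideal.submodule_span_eq]
  obtain ⟨u, hu⟩ := dvd_iff_isRoot.2 h0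
  have hyd : (AdjoinRoot.root (X ^ d - C f)) ^ d = AdjoinRoot.of (X ^ d - C f) f := by
    have := AdjoinRoot.eval₂_root (X ^ d - C f)
    simpa [sub_eq_zero] using this
  apply le_antisymm
  · have : ptIdeal d f a 0 = Ideal.span {AdjoinRoot.of (X ^ d - C f) (X - C a)} ⊔
        Ideal.span {AdjoinRoot.root _} := by
      rw [ptIdeal, map_zero, map_zero, sub_zero, Ideal.span_insert]
    rw [this]
    set I := Ideal.span {AdjoinRoot.of (X ^ d - C f) (X - C a)}
    have h1 : Ideal.map (Ideal.Quotient.mk I) ((I ⊔ Ideal.span {AdjoinRoot.root _}) ^ d) = ⊥ := by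
      rw [Ideal.map_pow, Ideal.map_sup, Ideal.map_quotient_self, bot_sup_eq, Ideal.map_span,
        Set.image_singleton, Ideal.span_singleton_pow, ← map_pow, hyd, Ideal.span_singleton_eq_bot,
        Ideal.Quotient.eq_zero_iff_mem, Ideal.mem_span_singleton]
      exact map_dvd _ ⟨u, hu⟩
    rw [Ideal.map_eq_bot_iff_le_ker, Ideal.mk_ker] at h1
    exact h1
  · rw [Ideal.span_le, Set.singleton_subset_iff]
    have hcop : IsCoprime u ((X - C a) ^ d) := by
      apply IsCoprime.pow_right
      refine ((irreducible_X_sub_C a).coprime_iff_not_dvd.2 ?_).symm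
      rintro ⟨v, rfl⟩
      have := hsqf (X - C a) ⟨v, by rw [hu]; ring⟩
      exact not_isUnit_X_sub_C a this
    obtain ⟨α, β, hab⟩ := hcop
    have : X - C a = α * f + β * (X - C a) * (X - C a) ^ d := by
      conv_lhs => rw [← mul_one (X - C a), ← hab]
      rw [hu]; ring
    rw [SetLike.mem_coe, this, map_add, map_mul, map_mul, ← hyd, map_pow]
    refine Ideal.add_mem _ (Ideal.mul_mem_left _ _ (Ideal.pow_mem_pow ?_ _))
      (Ideal.mul_mem_left _ _ (Ideal.pow_mem_pow ?_ _))
    · exact Ideal.subset_span (by simp)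
    · exact Ideal.subset_span (by simp)

theorem stmt_0 {K : Type*} [Field K] [IsAlgClosed K] (d n : ℕ)
    (hd : 2 ≤ d) (hdn : d < n) (hgcd : Nat.gcd n d = 1)
    (hchar : ¬ (ringChar K ∣ d))
    (f : K[X]) (hmonic : f.Monic) (hdeg : f.natDegree = n) (hsqf : Squarefree f)
    (hDed : IsDedekindDomain (CurveRing K d f))
    (a c : K) (hP : c ^ d = f.eval a)
    (m : ℕ) (hm : 1 < m)
    (horder : IsTorsionOfOrder d f a c m) :
    m = d ∨ n ≤ m := by
  by_contra! hcon
  obtain ⟨hmd, hmn⟩ := hcon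
  haveI : NeZero d := ⟨by omega⟩
  have hF : ((X : K[X][X]) ^ d - C f).Monic := monic_X_pow_sub_C f (by omega)
  have hFd : ((X : K[X][X]) ^ d - C f).natDegree = d := natDegree_X_pow_sub_C
  have hyd : (AdjoinRoot.root (X ^ d - C f)) ^ d = AdjoinRoot.of (X ^ d - C f) f := by
    have := AdjoinRoot.eval₂_root (X ^ d - C f)
    simpa [sub_eq_zero] using this
  have hinj : Function.Injective (AdjoinRoot.of ((X : K[X][X]) ^ d - C f)) := by
    apply AdjoinRoot.of.injective_of_degree_ne_zero
    rw [degree_X_pow_sub_C (by omega)]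
    exact_mod_cast (by omega : d ≠ 0)
  set P := ptIdeal d f a c with hPdef
  have hker := ptIdeal_eq_ker d f a c hP
  haveI hprime : P.IsPrime := by rw [hPdef, hker]; exact RingHom.ker_isPrime _
  have hPbot : P ≠ ⊥ := by
    intro h
    have h1 : AdjoinRoot.of (X ^ d - C f) (X - C a) ∈ P := Ideal.subset_span (by simp)
    rw [h, Ideal.mem_bot] at h1
    exact X_sub_C_ne_zero a (hinj (by rw [h1, map_zero]))
  obtain ⟨g, hg⟩ := horder.1.2.principal
  rw [Ideal.submodule_span_eq] at hg
  have hg0 : g ≠ 0 := by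
    rintro rfl
    rw [Ideal.span_singleton_zero] at hg
    exact hPbot (eq_bot_iff.2 (by
      intro z hz
      have h1 := Ideal.pow_mem_pow hz m
      rw [hg, Ideal.mem_bot] at h1
      exact eq_zero_of_pow_eq_zero h1))
  let b : Module.Basis (Fin d) K[X] (CurveRing K d f) :=
    (AdjoinRoot.powerBasis' hF).basis.reindex (finCongr hFd)
  have hb : ∀ i, b i = (AdjoinRoot.root (X ^ d - C f)) ^ (i : ℕ) := by
    intro i
    simp only [b, Module.Basis.reindex_apply]
    rw [PowerBasis.basis_eq_pow]
    rfl
  have hle : (Algebra.norm K[X] g).natDegree ≤ m := by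
    rw [← finrank_quotient_span_eq_natDegree_norm (F := K) b hg0, ← hg]
    exact finrank_pow_aux P hPbot (pt_sub_mem d f a c) m
  have hbd := fun k hk => (norm_aux d n hgcd f hmonic hdeg _ hyd b hb g k hk).trans hle
  have hgv : g = AdjoinRoot.of (X ^ d - C f) (b.repr g 0) := by
    conv_lhs => rw [← b.sum_repr g]
    rw [Finset.sum_eq_single 0]
    · rw [hb, Fin.val_zero, pow_zero, Algebra.smul_def, mul_one]; rfl
    · intro k _ hk
      by_contra hne
      have h0 : b.repr g k ≠ 0 := fun h => hne (by rw [h, zero_smul])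
      have h1 := hbd k h0
      have h2 : 1 ≤ (k : ℕ) := Nat.one_le_iff_ne_zero.2 fun h => hk (Fin.ext (by simpa using h))
      nlinarith
    · simp
  have hv0 : b.repr g 0 ≠ 0 := by
    intro h; rw [h, map_zero] at hgv; exact hg0 hgv
  have hvdeg := hbd 0 hv0
  set v := b.repr g 0 with hv
  have hva : v.eval a = 0 := by
    have h1 : g ∈ P := Ideal.pow_le_self (by omega : m ≠ 0) (hg ▸ Ideal.mem_span_singleton_self g)
    rw [hPdef, hker, RingHom.mem_ker, hgv, ptEval_of] at h1
    exact h1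
  have hv1 : 1 ≤ v.natDegree := by
    by_contra h
    have h2 := eq_C_of_natDegree_eq_zero (by omega : v.natDegree = 0)
    rw [h2, eval_C] at hva
    rw [hva, map_zero] at h2
    exact hv0 h2
  by_cases hc : c = 0
  · subst hc
    have hfa : f.eval a = 0 := by rw [← hP, zero_pow (by omega)]
    have h1 : m ≤ d := horder.2 ⟨by omega, ram_principal d f hsqf a hfa⟩
    have h2 : d ≤ m := by
      simp at hvdeg
      nlinarith
    exact hmd (le_antisymm h1 h2)
  · haveI : NeZero (d : K) := ⟨fun h => hchar ((ringChar.spec K d).1 h)⟩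
    obtain ⟨ζ, hζ⟩ := HasEnoughRootsOfUnity.exists_primitiveRoot K d
    have hP' : (ζ * c) ^ d = f.eval a := by rw [mul_pow, hζ.pow_eq_one, one_mul, hP]
    have h1 : AdjoinRoot.root (X ^ d - C f) - AdjoinRoot.of _ (C c) ∈ P :=
      Ideal.subset_span (by simp)
    have h2 := Ideal.pow_mem_pow h1 m
    rw [hg, Ideal.mem_span_singleton, hgv] at h2
    have h3 := map_dvd (ptEval d f a (ζ * c) hP') h2
    rw [ptEval_of, hva, zero_dvd_iff, map_pow, map_sub, ptEval_of, ptEval_root, eval_C] at h3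
    have h4 := eq_zero_of_pow_eq_zero h3
    have h5 : ζ = 1 := mul_right_cancel₀ hc (by rw [one_mul]; exact sub_eq_zero.1 h4)
    exact hζ.ne_one (by omega) h5
end

section
/- A K-point P = (a,c) of the affine curve y^d = f(x) is a torsion point of order exactly d (that is, d is the least positive integer m such that m_P^m is a principal ideal of A) if and only if c = 0, i.e., if and only if a is one of the n roots of f. In particular, the curve contains exactly n torsion points of order d, namely the points (w,0) for the n distinct roots w of f. -/
open Polynomial

section Aux

universe u

variable {K : Type u} [Field K]

lemma aux_monic (d : ℕ) (hd : 2 ≤ d) (f : K[X]) : ((X : K[X][X]) ^ d - C f).Monic :=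
  monic_X_pow_sub_C f (by omega)

lemma aux_degree (d : ℕ) (hd : 2 ≤ d) (f : K[X]) : ((X : K[X][X]) ^ d - C f).degree = d :=
  degree_X_pow_sub_C (by omega) f

lemma aux_of_inj (d : ℕ) (hd : 2 ≤ d) (f : K[X]) :
    Function.Injective (AdjoinRoot.of ((X : K[X][X]) ^ d - C f)) := by
  apply AdjoinRoot.of.injective_of_degree_ne_zero
  rw [aux_degree d hd f]
  exact_mod_cast (by omega : d ≠ 0)

lemma aux_root_pow (d : ℕ) (f : K[X]) :
    (AdjoinRoot.root ((X : K[X][X]) ^ d - C f)) ^ d = AdjoinRoot.of _ f := by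
  have h := AdjoinRoot.eval₂_root ((X : K[X][X]) ^ d - C f)
  simpa [sub_eq_zero] using h

/-- a valuation centred at infinity -/
structure InfVal (d : ℕ) (f : K[X]) {Γ : Type*} [LinearOrderedCommGroupWithZero Γ]
    (w : Valuation (CurveRing K d f) Γ) : Prop where
  const : ∀ b : K, b ≠ 0 → w (AdjoinRoot.of _ (C b)) = 1
  big : 1 < w (AdjoinRoot.of _ X)

lemma exists_infVal [IsAlgClosed K] (d : ℕ) (hd : 2 ≤ d) (f : K[X])
    [IsDomain (CurveRing K d f)] :
    ∃ (Γ : Type u) (_ : LinearOrderedCommGroupWithZero Γ) (w : Valuation (CurveRing K d f) Γ),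
      InfVal d f w := by
  let A := CurveRing K d f
  let L := FractionRing A
  let φ : K →+* L := (algebraMap A L).comp ((AdjoinRoot.of _).comp C)
  let _ : Algebra K L := φ.toAlgebra
  have hφ : ∀ b, algebraMap K L b = algebraMap A L (AdjoinRoot.of _ (C b)) := fun b => rfl
  have hint : ∀ z : L, IsIntegral K z → z ∈ (⊥ : Subalgebra K L) := by
    intro z hz
    have h1 := IsAlgClosed.degree_eq_one_of_irreducible K (minpoly.irreducible hz)
    exact minpoly.mem_range_of_degree_eq_one K z h1
  let R : Subring L := (⊥ : Subalgebra K L).toSubring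
  have : IsIntegrallyClosedIn R L := by
    rw [isIntegrallyClosedIn_iff]
    refine ⟨Subtype.val_injective, ?_⟩
    intro z hz
    have hz' : IsIntegral (⊥ : Subalgebra K L) z := hz
    have : IsIntegral K z := isIntegral_trans z hz'
    exact ⟨⟨z, hint z this⟩, rfl⟩
  have hx : algebraMap A L (AdjoinRoot.of _ X) ∉ R := by
    intro h
    obtain ⟨b, hb⟩ := Algebra.mem_bot.1 h
    rw [hφ] at hb
    have h2 := aux_of_inj d hd f (IsFractionRing.injective A L hb)
    have := congrArg natDegree h2
    simp at this
  obtain ⟨V, hV, hxV⟩ := Subring.exists_le_valuationSubring_of_isIntegrallyClosedIn hx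
  have hle : ∀ b : K, V.valuation (algebraMap K L b) ≤ 1 := by
    intro b
    rw [V.valuation_le_one_iff]
    exact hV (Algebra.mem_bot.2 ⟨b, rfl⟩)
  refine ⟨V.ValueGroup, inferInstance, V.valuation.comap (algebraMap A L), ?_, ?_⟩
  · intro b hb
    change V.valuation (algebraMap K L b) = 1
    refine le_antisymm (hle b) ?_
    have h := hle b⁻¹
    rw [map_inv₀, map_inv₀] at h
    refine (inv_le_one₀ ?_).1 h
    rw [Valuation.pos_iff]
    simpa using hb
  · change 1 < V.valuation (algebraMap A L (AdjoinRoot.of _ X))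
    rw [← not_le, V.valuation_le_one_iff]
    exact hxV

lemma infVal_poly {d : ℕ} {f : K[X]} {Γ : Type*} [LinearOrderedCommGroupWithZero Γ]
    {w : Valuation (CurveRing K d f) Γ} (hw : InfVal d f w) (q : K[X]) (hq : q ≠ 0) :
    w (AdjoinRoot.of _ q) = w (AdjoinRoot.of _ X) ^ q.natDegree := by
  classical
  have hterm : ∀ i, q.coeff i ≠ 0 →
      w (AdjoinRoot.of _ (C (q.coeff i) * X ^ i)) = w (AdjoinRoot.of _ X) ^ i := by
    intro i hi
    rw [map_mul, map_mul, hw.const _ hi, one_mul, map_pow, map_pow]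
  have hpos : (0 : Γ) < w (AdjoinRoot.of _ X) := lt_trans zero_lt_one hw.big
  have hlc : q.coeff q.natDegree ≠ 0 := by simpa using hq
  conv_lhs => rw [q.as_sum_range_C_mul_X_pow, map_sum]
  refine (Valuation.map_sum_eq_of_lt (j := q.natDegree) w (by simp) ?_).trans (hterm _ hlc)
  · intro i hi
    rw [hterm _ hlc]
    by_cases h0 : q.coeff i = 0
    · simp only [h0, map_zero, zero_mul]; exact pow_pos hpos _
    · rw [hterm _ h0]
      apply pow_lt_pow_right₀ hw.big
      simp at hi
      omega

lemma infVal_root {d : ℕ} {f : K[X]} {Γ : Type*} [LinearOrderedCommGroupWithZero Γ]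
    {w : Valuation (CurveRing K d f) Γ} (hw : InfVal d f w) (hf : f ≠ 0) :
    w (AdjoinRoot.root _) ^ d = w (AdjoinRoot.of _ X) ^ f.natDegree := by
  rw [← map_pow, aux_root_pow, infVal_poly hw f hf]

lemma key (d n : ℕ) (hd : 2 ≤ d) (hdn : d < n) (hgcd : Nat.gcd n d = 1)
    (f : K[X]) (hf : f ≠ 0) (hdeg : f.natDegree = n) (u : CurveRing K d f) (hu : u ≠ 0) :
    ∃ N : ℕ, (∀ (Γ : Type u) [LinearOrderedCommGroupWithZero Γ]
        (w : Valuation (CurveRing K d f) Γ), InfVal d f w →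
        w u ^ d = w (AdjoinRoot.of _ X) ^ N) ∧
      (N ≤ d → ∃ q : K[X], u = AdjoinRoot.of _ q ∧ d * q.natDegree = N) := by
  classical
  have hm := aux_monic d hd f
  obtain ⟨p0, rfl⟩ := AdjoinRoot.mk_surjective u
  set P : K[X][X] := (X : K[X][X]) ^ d - C f with hP
  set p := p0 %ₘ P with hp
  have hmk : AdjoinRoot.mk P p0 = AdjoinRoot.mk P p := by
    rw [AdjoinRoot.mk_eq_mk, hp]
    exact ⟨p0 /ₘ P, by rw [sub_eq_iff_eq_add, add_comm]; exact (modByMonic_add_div p0 P).symm⟩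
  rw [hmk] at hu ⊢
  have hp0 : p ≠ 0 := by rintro h; rw [h] at hu; simp at hu
  have hpd : p.degree < d := by
    rw [← aux_degree d hd f]; exact degree_modByMonic_lt p0 hm
  have hsd : ∀ i ∈ p.support, i < d := by
    intro i hi
    have := (le_degree_of_mem_supp i hi).trans_lt hpd
    exact_mod_cast this
  obtain ⟨j, hj, hjmax⟩ := p.support.exists_max_image
    (fun i => d * (p.coeff i).natDegree + n * i) (support_nonempty.2 hp0)
  refine ⟨d * (p.coeff j).natDegree + n * j, ?_, ?_⟩
  · intro Γ _ w hw
    have hpos : (0 : Γ) < w (AdjoinRoot.of _ X) := lt_trans zero_lt_one hw.big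
    have hterm : ∀ i ∈ p.support, w (AdjoinRoot.mk P (C (p.coeff i) * X ^ i)) ^ d =
        w (AdjoinRoot.of _ X) ^ (d * (p.coeff i).natDegree + n * i) := by
      intro i hi
      rw [map_mul, map_pow, AdjoinRoot.mk_C, AdjoinRoot.mk_X, map_mul, map_pow,
        infVal_poly hw _ (mem_support_iff.1 hi), mul_pow, ← pow_mul, ← pow_mul, mul_comm i d,
        pow_mul _ d i, infVal_root hw hf, hdeg, pow_add, ← pow_mul, mul_comm d]
    conv_lhs => rw [p.as_sum_support_C_mul_X_pow, map_sum]
    rw [Valuation.map_sum_eq_of_lt (j := j) _ hj, hterm j hj]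
    · intro i hi
      simp only [Finset.mem_sdiff, Finset.mem_singleton] at hi
      refine lt_of_pow_lt_pow_left₀ d zero_le ?_
      rw [hterm j hj, hterm i hi.1]
      apply pow_lt_pow_right₀ hw.big
      refine lt_of_le_of_ne (hjmax i hi.1) ?_
      intro heq
      apply hi.2
      have h1 : n * i ≡ n * j [MOD d] := by
        have h2 : (d * (p.coeff i).natDegree + n * i) % d =
          (d * (p.coeff j).natDegree + n * j) % d := by rw [heq]
        simpa [Nat.ModEq] using h2
      have h3 : i ≡ j [MOD d] :=
        Nat.ModEq.cancel_left_of_coprime (by rw [Nat.gcd_comm]; exact hgcd) h1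
      exact Nat.ModEq.eq_of_lt_of_lt h3 (hsd i hi.1) (hsd j hj)
  · intro hN
    have hz : ∀ i ∈ p.support, i = 0 := by
      intro i hi
      have := hjmax i hi
      by_contra h
      have : n * 1 ≤ n * i := Nat.mul_le_mul_left n (by omega)
      omega
    have hj0 := hz j hj
    subst hj0
    refine ⟨p.coeff 0, ?_, by simp⟩
    rw [← AdjoinRoot.mk_C]
    congr 1
    ext1 i
    rw [coeff_C]
    split_ifs with h
    · rw [h]
    · by_contra h'
      exact h (hz i (mem_support_iff.2 h'))

/-- twisted evaluation -/
noncomputable def evalPt (d : ℕ) (f : K[X]) (a c : K) (h : c ^ d = f.eval a) :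
    CurveRing K d f →+* K :=
  AdjoinRoot.lift (evalRingHom a) c (by simp [h])

/-- the automorphism `y ↦ ζ y` -/
noncomputable def twist (d : ℕ) (f : K[X]) (z : K) (h : z ^ d = 1) :
    CurveRing K d f →+* CurveRing K d f :=
  AdjoinRoot.lift (AdjoinRoot.of _) (AdjoinRoot.of _ (C z) * AdjoinRoot.root _) (by
    simp only [eval₂_sub, eval₂_pow, eval₂_X, eval₂_C, mul_pow, aux_root_pow, ← map_pow, h]
    simp)

lemma evalPt_mem (d : ℕ) (f : K[X]) (a c : K) (h : c ^ d = f.eval a) (u : CurveRing K d f)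
    (hu : u ∈ ptIdeal d f a c) : evalPt d f a c h u = 0 := by
  have : ptIdeal d f a c ≤ RingHom.ker (evalPt d f a c h) := by
    rw [ptIdeal, Ideal.span_le]
    rintro x (rfl | rfl) <;> simp [evalPt, RingHom.mem_ker]
  exact this hu

lemma twist_infVal {d : ℕ} {f : K[X]} {Γ : Type*} [LinearOrderedCommGroupWithZero Γ]
    {w : Valuation (CurveRing K d f) Γ} (hw : InfVal d f w) (z : K) (h : z ^ d = 1) :
    InfVal d f (w.comap (twist d f z h)) := by
  constructor
  · intro b hb
    simpa [twist] using hw.const b hb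
  · simpa [twist] using hw.big

end Aux

section Aux2

universe u

variable {K : Type u} [Field K]

lemma one_le_infVal (d n : ℕ) (hd : 2 ≤ d) (hdn : d < n) (hgcd : Nat.gcd n d = 1)
    (f : K[X]) (hf : f ≠ 0) (hdeg : f.natDegree = n) (u : CurveRing K d f) (hu : u ≠ 0)
    (Γ : Type u) [LinearOrderedCommGroupWithZero Γ]
    (w : Valuation (CurveRing K d f) Γ) (hw : InfVal d f w) : 1 ≤ w u := by
  obtain ⟨N, hN, -⟩ := key d n hd hdn hgcd f hf hdeg u hu
  have h := hN Γ w hw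
  have h1 : 1 ≤ w u ^ d := by rw [h]; exact one_le_pow₀ hw.big.le
  exact (one_le_pow_iff_of_nonneg zero_le (by omega)).1 h1

lemma of_sub_ne (d : ℕ) (hd : 2 ≤ d) (f : K[X]) (a : K) :
    AdjoinRoot.of ((X : K[X][X]) ^ d - C f) (X - C a) ≠ 0 := by
  intro h
  rw [map_eq_zero_iff _ (aux_of_inj d hd f)] at h
  exact X_sub_C_ne_zero a h

lemma twist_val (d n : ℕ) (hd : 2 ≤ d) (hdn : d < n) (hgcd : Nat.gcd n d = 1)
    (f : K[X]) (hf : f ≠ 0) (hdeg : f.natDegree = n)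
    (u : CurveRing K d f) (Γ : Type u) [LinearOrderedCommGroupWithZero Γ]
    (w : Valuation (CurveRing K d f) Γ) (hw : InfVal d f w) (x : K) (hx : x ^ d = 1) :
    w (twist d f x hx u) = w u := by
  by_cases hu : u = 0
  · simp [hu]
  obtain ⟨N, hN, hq⟩ := key d n hd hdn hgcd f hf hdeg u hu
  have h1 := hN Γ w hw
  have h2 := hN Γ _ (twist_infVal hw x hx)
  have h3 : (w.comap (twist d f x hx)) (AdjoinRoot.of _ X) = w (AdjoinRoot.of _ X) := by
    simp [twist]
  rw [h3, ← h1] at h2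
  exact (pow_left_inj₀ zero_le zero_le (by omega)).1 h2

/-- the generator of a principal power, as needed for both directions -/
lemma gen_poly (d n : ℕ) [IsAlgClosed K] (hd : 2 ≤ d) (hdn : d < n) (hgcd : Nat.gcd n d = 1)
    (f : K[X]) (hf : f ≠ 0) (hdeg : f.natDegree = n) [IsDomain (CurveRing K d f)]
    (u z U : CurveRing K d f) (a : K) (k : ℕ) (hk : k ≤ d)
    (hU : ∀ (Γ : Type u) [LinearOrderedCommGroupWithZero Γ]
      (w : Valuation (CurveRing K d f) Γ), InfVal d f w → w U = w u ^ d)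
    (h : z * U = AdjoinRoot.of _ (X - C a) ^ k) :
    ∃ q : K[X], u = AdjoinRoot.of _ q ∧ q.natDegree * d ≤ k := by
  obtain ⟨Γ, _, w, hw⟩ := exists_infVal d hd f
  have hpos : (0 : Γ) < w (AdjoinRoot.of _ X) := lt_trans zero_lt_one hw.big
  have h4 := congrArg w h
  rw [map_mul, hU Γ w hw, map_pow,
    infVal_poly hw _ (X_sub_C_ne_zero a), natDegree_X_sub_C, pow_one] at h4
  have hz : z ≠ 0 := by
    rintro rfl
    rw [map_zero, zero_mul] at h4
    exact (pow_pos hpos k).ne h4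
  have hu : u ≠ 0 := by
    rintro rfl
    rw [map_zero, zero_pow (by omega), mul_zero] at h4
    exact (pow_pos hpos k).ne h4
  obtain ⟨N, hN, hq⟩ := key d n hd hdn hgcd f hf hdeg u hu
  have hz1 := one_le_infVal d n hd hdn hgcd f hf hdeg z hz Γ w hw
  rw [hN Γ w hw] at h4
  have h5 : w (AdjoinRoot.of _ X) ^ N ≤ w (AdjoinRoot.of _ X) ^ k := by
    rw [← h4]; exact le_mul_of_one_le_left zero_le hz1
  have h6 : N ≤ k := (pow_le_pow_iff_right₀ hw.big).1 h5
  obtain ⟨q, hq1, hq2⟩ := hq (h6.trans hk)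
  exact ⟨q, hq1, by rw [mul_comm]; omega⟩

lemma dir_two (d n : ℕ) [IsAlgClosed K] (hd : 2 ≤ d) (hdn : d < n) (hgcd : Nat.gcd n d = 1)
    (hchar : ¬ (ringChar K ∣ d))
    (f : K[X]) (hf : f ≠ 0) (hdeg : f.natDegree = n) [IsDomain (CurveRing K d f)]
    (a c : K) (hac : c ^ d = f.eval a) (hc : c ≠ 0)
    (hprin : (ptIdeal d f a c ^ d).IsPrincipal) : False := by
  have hd0 : (d : K) ≠ 0 := by
    intro h; exact hchar ((ringChar.spec K d).1 h)
  have : NeZero (d : K) := ⟨hd0⟩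
  obtain ⟨ζ, hζ⟩ := HasEnoughRootsOfUnity.exists_primitiveRoot K d
  obtain ⟨u, hu⟩ := hprin
  rw [← Ideal.span] at hu
  set s := nthRootsFinset d (1 : K) with hsdef
  have hs : s.card = d := hζ.card_nthRootsFinset
  have hs1 : ∀ x ∈ s, x ^ d = 1 := fun x hx => (mem_nthRootsFinset (by omega) _).1 hx
  let I : s → Ideal (CurveRing K d f) := fun x =>
    (ptIdeal d f a c).map (twist d f x.1 (hs1 x.1 x.2))
  have hxI : ∀ x, AdjoinRoot.of _ (X - C a) ∈ I x := by
    intro x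
    have h1 : AdjoinRoot.of _ (X - C a) ∈ ptIdeal d f a c := Ideal.subset_span (by simp)
    have h2 := Ideal.mem_map_of_mem (twist d f x.1 (hs1 x.1 x.2)) h1
    rwa [twist, AdjoinRoot.lift_of] at h2
  have hyI : ∀ x, AdjoinRoot.of _ (C x.1) * AdjoinRoot.root _ - AdjoinRoot.of _ (C c) ∈ I x := by
    intro x
    have h1 : AdjoinRoot.root _ - AdjoinRoot.of _ (C c) ∈ ptIdeal d f a c :=
      Ideal.subset_span (by simp)
    have h2 := Ideal.mem_map_of_mem (twist d f x.1 (hs1 x.1 x.2)) h1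
    rwa [map_sub, twist, AdjoinRoot.lift_of, AdjoinRoot.lift_root] at h2
  have hcop : ((s.attach : Finset s) : Set s).Pairwise (Function.onFun IsCoprime I) := by
    intro x _ y _ hxy
    have hne : x.1 - y.1 ≠ 0 := fun h => hxy (Subtype.ext (sub_eq_zero.1 h))
    rw [Function.onFun, Ideal.isCoprime_iff_exists]
    let t : CurveRing K d f := AdjoinRoot.of _ (C (((x.1 - y.1) * c)⁻¹))
    refine ⟨t * AdjoinRoot.of _ (C y.1) *
      (AdjoinRoot.of _ (C x.1) * AdjoinRoot.root _ - AdjoinRoot.of _ (C c)),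
      Ideal.mul_mem_left _ _ (hyI x),
      t * (-AdjoinRoot.of _ (C x.1)) *
      (AdjoinRoot.of _ (C y.1) * AdjoinRoot.root _ - AdjoinRoot.of _ (C c)),
      Ideal.mul_mem_left _ _ (hyI y), ?_⟩
    have ht : t * ((AdjoinRoot.of _ (C y.1) - AdjoinRoot.of _ (C x.1)) *
        AdjoinRoot.of _ (C c)) = -1 := by
      simp only [t, ← map_sub, ← map_mul]
      have : ((x.1 - y.1) * c)⁻¹ * ((y.1 - x.1) * c) = -1 := by
        field_simp
        ring
      rw [this]; simp
    linear_combination -ht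
  have hprod : AdjoinRoot.of _ (X - C a) ∈ ∏ x ∈ s.attach, I x := by
    rw [Ideal.prod_eq_iInf_of_pairwise_isCoprime hcop]
    simp only [Ideal.mem_iInf]
    exact fun x _ => hxI x
  have hpow : AdjoinRoot.of _ (X - C a) ^ d ∈
      Ideal.span {∏ x ∈ s.attach, twist d f x.1 (hs1 x.1 x.2) u} := by
    have h1 := Ideal.pow_mem_pow hprod d
    rw [← Finset.prod_pow] at h1
    have h2 : ∀ x : s, I x ^ d = Ideal.span {twist d f x.1 (hs1 x.1 x.2) u} := by
      intro x
      simp only [I]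
      rw [← Ideal.map_pow, hu, Ideal.map_span, Set.image_singleton]
    simp only [h2] at h1
    rwa [Ideal.prod_span_singleton] at h1
  obtain ⟨z, hz⟩ := Ideal.mem_span_singleton'.1 hpow
  obtain ⟨q, hq, hqd⟩ := gen_poly d n hd hdn hgcd f hf hdeg u z _ a d le_rfl
    (fun Γ _ w hw => by
      rw [map_prod, Finset.prod_congr rfl
        (fun x _ => twist_val d n hd hdn hgcd f hf hdeg u Γ w hw x.1 (hs1 x.1 x.2)),
        Finset.prod_const, Finset.card_attach, hs]) hz
  have hum : u ∈ ptIdeal d f a c := by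
    apply Ideal.pow_le_self (n := d) (by omega)
    rw [hu]; exact Ideal.mem_span_singleton_self u
  have hqa : q.eval a = 0 := by
    have := evalPt_mem d f a c hac u hum
    simpa [hq, evalPt] using this
  have hy : (AdjoinRoot.root _ - AdjoinRoot.of _ (C c)) ^ d ∈ ptIdeal d f a c ^ d :=
    Ideal.pow_mem_pow (Ideal.subset_span (by simp)) d
  rw [hu] at hy
  obtain ⟨v, hv⟩ := Ideal.mem_span_singleton'.1 hy
  have hac2 : (ζ * c) ^ d = f.eval a := by rw [mul_pow, hζ.pow_eq_one, one_mul, hac]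
  have h7 := congrArg (evalPt d f a (ζ * c) hac2) hv
  rw [hq, map_mul] at h7
  simp [evalPt, hqa] at h7
  have h8 : ζ * c - c = 0 := by
    have h9 := h7.symm
    exact pow_eq_zero_iff (by omega) |>.1 h9
  have h10 : ζ = 1 := by
    have : (ζ - 1) * c = 0 := by linear_combination h8
    rcases mul_eq_zero.1 this with h | h
    · exact sub_eq_zero.1 h
    · exact absurd h hc
  exact hζ.ne_one (by omega) h10

lemma pair_pow_le {R : Type*} [CommRing R] (x y : R) (k : ℕ) :
    Ideal.span {x, y} ^ k ≤ Ideal.span {x} ⊔ Ideal.span {y ^ k} := by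
  induction k with
  | zero => simp
  | succ k ih =>
    rw [pow_succ]
    refine (Ideal.mul_mono_left ih).trans ?_
    rw [Ideal.span_insert, Ideal.sup_mul]
    refine sup_le (Ideal.mul_le_left.trans le_sup_left) ?_
    rw [Ideal.mul_sup]
    refine sup_le (Ideal.mul_le_right.trans le_sup_left) ?_
    rw [Ideal.span_singleton_mul_span_singleton, ← pow_succ]
    exact le_sup_right

lemma dir_one (d n : ℕ) [IsAlgClosed K] (hd : 2 ≤ d) (hdn : d < n) (hgcd : Nat.gcd n d = 1)
    (f : K[X]) (hf : f ≠ 0) (hdeg : f.natDegree = n) [IsDomain (CurveRing K d f)]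
    (hsqf : Squarefree f) (a : K) (ha : f.eval a = 0) :
    IsTorsionOfOrder d f a 0 d := by
  set x : CurveRing K d f := AdjoinRoot.of _ (X - C a) with hx
  set y : CurveRing K d f := AdjoinRoot.root _ with hy
  obtain ⟨g, hg⟩ := dvd_iff_isRoot.2 ha
  have hcop : IsCoprime ((X - C a) ^ (d - 1)) g := by
    apply IsCoprime.pow_left
    rw [(irreducible_X_sub_C a).coprime_iff_not_dvd]
    rintro ⟨g', hg'⟩
    have h1 : (X - C a) * (X - C a) ∣ f := ⟨g', by rw [hg, hg', mul_assoc]⟩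
    exact not_isUnit_X_sub_C a (hsqf _ h1)
  have hyd : y ^ d = x * AdjoinRoot.of _ g := by
    rw [hy, aux_root_pow, hx, ← map_mul, ← hg]
  have hpt : ptIdeal d f a 0 = Ideal.span {x, y} := by
    simp [ptIdeal, hx, hy]
  have hxm : x ∈ ptIdeal d f a 0 := by rw [hpt]; exact Ideal.subset_span (by simp)
  have hym : y ∈ ptIdeal d f a 0 := by rw [hpt]; exact Ideal.subset_span (by simp)
  have hxd : x ∈ ptIdeal d f a 0 ^ d := by
    obtain ⟨r, t, hrt⟩ := hcop
    have h1 := congrArg (fun p => x * AdjoinRoot.of ((X : K[X][X]) ^ d - C f) p) hrt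
    simp only [map_add, map_mul, map_pow, map_one, mul_one] at h1
    rw [← hx] at h1
    have h2 : x ^ d = x * x ^ (d - 1) := by rw [← pow_succ']; congr 1; omega
    have h3 : x = AdjoinRoot.of _ r * x ^ d + AdjoinRoot.of _ t * y ^ d := by
      rw [h2, hyd]
      linear_combination -h1
    rw [h3]
    exact add_mem (Ideal.mul_mem_left _ _ (Ideal.pow_mem_pow hxm d))
      (Ideal.mul_mem_left _ _ (Ideal.pow_mem_pow hym d))
  have hspan : ptIdeal d f a 0 ^ d = Ideal.span {x} := by
    apply le_antisymm
    · rw [hpt]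
      refine (pair_pow_le x y d).trans (sup_le le_rfl ?_)
      rw [Ideal.span_singleton_le_iff_mem, hyd]
      exact Ideal.mul_mem_right _ _ (Ideal.mem_span_singleton_self x)
    · rw [Ideal.span_singleton_le_iff_mem]; exact hxd
  refine ⟨⟨by omega, ⟨x, hspan⟩⟩, ?_⟩
  rintro k ⟨hk, u, hu⟩
  rw [← Ideal.span] at hu
  by_contra hkd
  push Not at hkd
  have h1 : x ^ k ∈ Ideal.span {u ^ d} := by
    rw [← Ideal.span_singleton_pow, ← hu, ← pow_mul, mul_comm, pow_mul]
    exact Ideal.pow_mem_pow hxd k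
  obtain ⟨z, hz⟩ := Ideal.mem_span_singleton'.1 h1
  obtain ⟨q, hq, hqd⟩ : ∃ q : K[X], u = AdjoinRoot.of _ q ∧ q.natDegree * d ≤ k :=
    gen_poly d n hd hdn hgcd f hf hdeg u z _ a k hkd.le
      (fun Γ _ w _ => map_pow w u d) hz
  have hum : u ∈ ptIdeal d f a 0 := by
    apply Ideal.pow_le_self (n := k) (by omega)
    rw [hu]; exact Ideal.mem_span_singleton_self u
  have hqa : q.eval a = 0 := by
    have := evalPt_mem d f a 0 (by rw [ha, zero_pow (by omega)]) u hum
    simpa [hq, evalPt] using this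
  have hq0 : q.natDegree = 0 := by
    by_contra h
    have : 1 * d ≤ q.natDegree * d := Nat.mul_le_mul_right d (by omega)
    omega
  rw [eq_C_of_natDegree_eq_zero hq0] at hqa hq
  rw [eval_C] at hqa
  rw [hqa] at hq
  simp at hq
  rw [hq, zero_pow (by omega), mul_zero] at hz
  exact pow_ne_zero k (of_sub_ne d hd f a) hz.symm

end Aux2

theorem stmt_1 {K : Type*} [Field K] [IsAlgClosed K] (d n : ℕ)
    (hd : 2 ≤ d) (hdn : d < n) (hgcd : Nat.gcd n d = 1)
    (hchar : ¬ (ringChar K ∣ d))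
    (f : K[X]) (hmonic : f.Monic) (hdeg : f.natDegree = n) (hsqf : Squarefree f)
    (hDed : IsDedekindDomain (CurveRing K d f)) :
    (∀ a c : K, c ^ d = f.eval a →
      (IsTorsionOfOrder d f a c d ↔ c = 0)) ∧
    {P : K × K | P.2 ^ d = f.eval P.1 ∧ IsTorsionOfOrder d f P.1 P.2 d} =
      {P : K × K | f.eval P.1 = 0 ∧ P.2 = 0} ∧
    {P : K × K | P.2 ^ d = f.eval P.1 ∧ IsTorsionOfOrder d f P.1 P.2 d}.ncard = n := by
  have hf : f ≠ 0 := hmonic.ne_zero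
  have h1 : ∀ a c : K, c ^ d = f.eval a → (IsTorsionOfOrder d f a c d ↔ c = 0) := by
    intro a c hac
    constructor
    · intro h
      by_contra hc
      exact dir_two d n hd hdn hgcd hchar f hf hdeg a c hac hc h.1.2
    · rintro rfl
      rw [zero_pow (by omega)] at hac
      exact dir_one d n hd hdn hgcd f hf hdeg hsqf a hac.symm
  have h2 : {P : K × K | P.2 ^ d = f.eval P.1 ∧ IsTorsionOfOrder d f P.1 P.2 d} =
      {P : K × K | f.eval P.1 = 0 ∧ P.2 = 0} := by
    ext ⟨a, c⟩
    simp only [Set.mem_ofPred_eq]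
    constructor
    · rintro ⟨h, h'⟩
      have hc := (h1 a c h).1 h'
      subst hc
      rw [zero_pow (by omega)] at h
      exact ⟨h.symm, rfl⟩
    · rintro ⟨h, rfl⟩
      have h3 : (0 : K) ^ d = f.eval a := by rw [h, zero_pow (by omega)]
      exact ⟨h3, (h1 a 0 h3).2 rfl⟩
  refine ⟨h1, h2, ?_⟩
  classical
  rw [h2]
  have h4 : {P : K × K | f.eval P.1 = 0 ∧ P.2 = 0} =
      (fun a : K => (a, (0 : K))) '' (f.roots.toFinset : Set K) := by
    ext ⟨a, c⟩
    simp [hf]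
    tauto
  rw [h4, Set.ncard_image_of_injective _ (fun a b h => by simpa using h),
    Set.ncard_coe_finset, Multiset.toFinset_card_of_nodup, ← hdeg]
  · exact (IsAlgClosed.splits f).natDegree_eq_card_roots.symm
  · exact nodup_roots (PerfectField.separable_iff_squarefree.2 hsqf)
end

section
/- A K-point P = (a,c) of the affine curve y^d = f(x) is a torsion point of order exactly n (that is, n is the least positive integer m such that m_P^m is a principal ideal of A) if and only if there exists a polynomial v ∈ K[X] with d·deg(v) ≤ n − 1 such that f(X) = (X − a)^n + v(X)^d. -/
open Polynomial

universe u w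

theorem exists_val {K : Type u} {A : Type w} [Field K] [IsAlgClosed K] [CommRing A] [IsDomain A]
    (φ : K[X] →+* A) (hφ : Function.Injective φ) :
    ∃ (Γ : Type w) (_ : LinearOrderedCommGroupWithZero Γ) (v : Valuation A Γ),
      (∀ z, v z = 0 → z = 0) ∧ (∀ r : K, r ≠ 0 → v (φ (C r)) = 1) ∧ 1 < v (φ X) := by
  let Q := FractionRing A
  let ψ : K[X] →+* Q := (algebraMap A Q).comp φ
  have hψ : Function.Injective ψ := (IsFractionRing.injective A Q).comp hφ
  let R : Subring Q := (ψ.comp C).range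
  have hR : IsIntegrallyClosedIn R Q := by
    rw [Subring.isIntegrallyClosedIn_iff]
    intro x hx
    let _ : Algebra K Q := (ψ.comp C).toAlgebra
    have hint : IsIntegral K x := by
      obtain ⟨p, hp, hpx⟩ := hx
      have hlift : p ∈ Polynomial.lifts ((ψ.comp C).rangeRestrict) := by
        rw [Polynomial.lifts_iff_coeff_lifts]
        intro k
        exact (ψ.comp C).rangeRestrict_surjective _
      obtain ⟨q, hq, _, hqm⟩ := Polynomial.lifts_and_natDegree_eq_and_monic hlift hp
      refine ⟨q, hqm, ?_⟩
      rw [← hq, Polynomial.eval₂_map] at hpx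
      exact hpx
    obtain ⟨r, hr⟩ := minpoly.mem_range_of_degree_eq_one K x
      (IsAlgClosed.degree_eq_one_of_irreducible K (minpoly.irreducible hint))
    exact ⟨r, hr⟩
  have hx : ψ X ∉ R := by
    rintro ⟨r, hr⟩
    have := hψ (show ψ (C r) = ψ X from hr)
    exact X_ne_C r this.symm
  obtain ⟨V, hV, hxV⟩ := Subring.exists_le_valuationSubring_of_isIntegrallyClosedIn hx
  refine ⟨V.ValueGroup, inferInstance, V.valuation.comap (algebraMap A Q), ?_, ?_, ?_⟩
  · intro z hz
    have : algebraMap A Q z = 0 := by simpa using hz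
    exact (IsFractionRing.injective A Q) (by simpa using this)
  · have key : ∀ r : K, V.valuation (ψ (C r)) ≤ 1 := fun r =>
      (V.valuation_le_one_iff _).2 (hV ⟨r, rfl⟩)
    intro r hr
    refine le_antisymm (key r) ?_
    have h1 : V.valuation (ψ (C r)) * V.valuation (ψ (C r⁻¹)) = 1 := by
      rw [← map_mul, ← map_mul, ← C_mul, mul_inv_cancel₀ hr]; simp
    calc (1 : V.ValueGroup) = V.valuation (ψ (C r)) * V.valuation (ψ (C r⁻¹)) := h1.symm
      _ ≤ V.valuation (ψ (C r)) * 1 := by gcongr; exact key _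
      _ = _ := mul_one _
  · by_contra h
    exact hxV ((V.valuation_le_one_iff _).1 (not_lt.1 h))

theorem val_poly {K A Γ : Type*} [Field K] [CommRing A] [LinearOrderedCommGroupWithZero Γ]
    (φ : K[X] →+* A) (v : Valuation A Γ) (hC : ∀ r : K, r ≠ 0 → v (φ (C r)) = 1)
    (hX : 1 < v (φ X)) (p : K[X]) (hp : p ≠ 0) : v (φ p) = v (φ X) ^ p.natDegree := by
  have hX0 : v (φ X) ≠ 0 := (zero_lt_one.trans hX).ne'
  have e : φ p = ∑ i ∈ Finset.range (p.natDegree + 1), φ (C (p.coeff i)) * φ X ^ i := by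
    conv_lhs => rw [p.as_sum_range_C_mul_X_pow]
    simp
  have hl : v (φ (C (p.coeff p.natDegree)) * φ X ^ p.natDegree) = v (φ X) ^ p.natDegree := by
    rw [map_mul, hC _ (by simpa using hp), one_mul, map_pow]
  rw [e, Valuation.map_sum_eq_of_lt v (j := p.natDegree) (by simp) ?_, hl]
  intro i hi
  rw [hl]
  have hi' : i < p.natDegree := by
    simp at hi; omega
  by_cases h0 : p.coeff i = 0
  · simp [h0, zero_lt_iff, hX0]
  · rw [map_mul, hC _ h0, one_mul, map_pow]
    exact pow_lt_pow_right₀ hX hi'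

section
variable {K : Type*} [Field K] {d n : ℕ} {f : K[X]} {Γ : Type*}
  [LinearOrderedCommGroupWithZero Γ]

theorem curve_rel : (AdjoinRoot.root ((X : K[X][X]) ^ d - C f)) ^ d = AdjoinRoot.of _ f := by
  have := AdjoinRoot.eval₂_root ((X : K[X][X]) ^ d - C f)
  simpa [sub_eq_zero] using this

theorem curve_repr (hd : 2 ≤ d) (g : CurveRing K d f) : ∃ G : ℕ → K[X],
    g = ∑ i ∈ Finset.range d, AdjoinRoot.of _ (G i) * AdjoinRoot.root _ ^ i := by
  have hm : ((X : K[X][X]) ^ d - C f).Monic := monic_X_pow_sub_C f (by omega)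
  obtain ⟨p, rfl⟩ := AdjoinRoot.mk_surjective g
  refine ⟨(p %ₘ ((X : K[X][X]) ^ d - C f)).coeff, ?_⟩
  have h1 : AdjoinRoot.mk ((X : K[X][X]) ^ d - C f) p
      = AdjoinRoot.mk _ (p %ₘ ((X : K[X][X]) ^ d - C f)) := by
    conv_lhs => rw [← modByMonic_add_div p ((X : K[X][X]) ^ d - C f)]
    simp
  have hdeg : (p %ₘ ((X : K[X][X]) ^ d - C f)).natDegree < d := by
    have := natDegree_modByMonic_lt p hm (by
      intro h
      have := congrArg natDegree h
      rw [natDegree_X_pow_sub_C] at this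
      simp at this; omega)
    rwa [natDegree_X_pow_sub_C] at this
  rw [h1, ← AdjoinRoot.aeval_eq, aeval_eq_sum_range' hdeg]
  simp [Algebra.smul_def]

theorem val_term (hdeg : f.natDegree = n) (hf : f ≠ 0)
    (v : Valuation (CurveRing K d f) Γ)
    (hC : ∀ r : K, r ≠ 0 → v (AdjoinRoot.of _ (C r)) = 1) (hX : 1 < v (AdjoinRoot.of _ X))
    (p : K[X]) (hp : p ≠ 0) (i : ℕ) :
    v (AdjoinRoot.of _ p * AdjoinRoot.root _ ^ i) ^ d
      = v (AdjoinRoot.of _ X) ^ (d * p.natDegree + n * i) := by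
  have h1 : v (AdjoinRoot.root ((X : K[X][X]) ^ d - C f)) ^ d = v (AdjoinRoot.of _ X) ^ n := by
    rw [← map_pow, curve_rel, val_poly _ v hC hX f hf, hdeg]
  rw [map_mul, mul_pow, val_poly _ v hC hX p hp, map_pow, ← pow_mul, ← pow_mul, mul_comm i d,
    pow_mul _ d i, h1, ← pow_mul, ← pow_add]
  congr 1; ring

theorem val_sum (hd : 2 ≤ d) (hdeg : f.natDegree = n) (hf : f ≠ 0) (hgcd : Nat.gcd n d = 1)
    (v : Valuation (CurveRing K d f) Γ)
    (hC : ∀ r : K, r ≠ 0 → v (AdjoinRoot.of _ (C r)) = 1) (hX : 1 < v (AdjoinRoot.of _ X))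
    (G : ℕ → K[X]) :
    v (∑ i ∈ Finset.range d, AdjoinRoot.of _ (G i) * AdjoinRoot.root _ ^ i)
      = (Finset.range d).sup' (by simp; omega)
        (fun i => v (AdjoinRoot.of _ (G i) * AdjoinRoot.root _ ^ i)) := by
  obtain ⟨j, hj, hjm⟩ := Finset.exists_mem_eq_sup' (s := Finset.range d) (by simp; omega)
    (fun i => v (AdjoinRoot.of ((X : K[X][X]) ^ d - C f) (G i) * AdjoinRoot.root _ ^ i))
  have hle : ∀ i ∈ Finset.range d,
      v (AdjoinRoot.of _ (G i) * AdjoinRoot.root _ ^ i)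
        ≤ v (AdjoinRoot.of _ (G j) * AdjoinRoot.root _ ^ j) := by
    intro i hi
    rw [← hjm]
    exact Finset.le_sup' (fun i => v (AdjoinRoot.of ((X : K[X][X]) ^ d - C f) (G i)
      * AdjoinRoot.root _ ^ i)) hi
  rw [hjm]
  by_cases h0 : v (AdjoinRoot.of _ (G j) * AdjoinRoot.root _ ^ j) = 0
  · rw [h0]
    rw [h0] at hle
    exact le_antisymm (v.map_sum_le hle) zero_le
  · refine v.map_sum_eq_of_lt hj ?_
    intro i hi
    simp only [Finset.mem_sdiff, Finset.mem_range, Finset.mem_singleton] at hi hj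
    refine lt_of_le_of_ne (hle i (by simpa using hi.1)) ?_
    intro he
    have hGj : G j ≠ 0 := by rintro h; simp [h] at h0
    have hGi : G i ≠ 0 := by rintro h; rw [← he] at h0; simp [h] at h0
    have e := congrArg (· ^ d) he
    simp only [val_term hdeg hf v hC hX _ hGj, val_term hdeg hf v hC hX _ hGi] at e
    have e2 := pow_right_injective₀ (zero_lt_one.trans hX) hX.ne' e
    have e3 : n * i ≡ n * j [MOD d] := by
      have : (d * (G i).natDegree + n * i) % d = (d * (G j).natDegree + n * j) % d := by rw [e2]
      simpa [Nat.ModEq, Nat.add_mod] using this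
    have e4 := Nat.ModEq.cancel_left_of_coprime (by rw [Nat.gcd_comm]; exact hgcd) e3
    exact hi.2 (Nat.ModEq.eq_of_lt_of_lt e4 hi.1 hj)

theorem le_val (hd : 2 ≤ d) (hdeg : f.natDegree = n) (hf : f ≠ 0) (hgcd : Nat.gcd n d = 1)
    (v : Valuation (CurveRing K d f) Γ)
    (hC : ∀ r : K, r ≠ 0 → v (AdjoinRoot.of _ (C r)) = 1) (hX : 1 < v (AdjoinRoot.of _ X))
    (G : ℕ → K[X]) (i : ℕ) (hi : i < d) (hG : G i ≠ 0) :
    v (AdjoinRoot.of _ X) ^ (d * (G i).natDegree + n * i) ≤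
    v (∑ i ∈ Finset.range d, AdjoinRoot.of _ (G i) * AdjoinRoot.root _ ^ i) ^ d := by
  rw [← val_term hdeg hf v hC hX _ hG, val_sum hd hdeg hf hgcd v hC hX]
  gcongr
  exact Finset.le_sup' (fun i => v (AdjoinRoot.of ((X : K[X][X]) ^ d - C f) (G i)
      * AdjoinRoot.root _ ^ i)) (by simpa using hi)

theorem one_le_val (hd : 2 ≤ d) (hdeg : f.natDegree = n) (hf : f ≠ 0) (hgcd : Nat.gcd n d = 1)
    (v : Valuation (CurveRing K d f) Γ)
    (hC : ∀ r : K, r ≠ 0 → v (AdjoinRoot.of _ (C r)) = 1) (hX : 1 < v (AdjoinRoot.of _ X))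
    (h : CurveRing K d f) (hh : h ≠ 0) : 1 ≤ v h := by
  obtain ⟨G, rfl⟩ := curve_repr hd h
  obtain ⟨i, hi, hG⟩ : ∃ i < d, G i ≠ 0 := by
    by_contra! hcon
    apply hh
    refine Finset.sum_eq_zero fun i hi => ?_
    rw [hcon i (by simpa using hi)]; simp
  have := le_val hd hdeg hf hgcd v hC hX G i hi hG
  have h2 := (one_le_pow₀ hX.le).trans this
  exact (one_le_pow_iff_of_nonneg zero_le (by omega)).1 h2

end

section
variable {K : Type*} [Field K] {d n : ℕ} {f : K[X]}

theorem exists_twist (ζ : K) (hζ : ζ ^ d = 1) : ∃ σ : CurveRing K d f →+* CurveRing K d f,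
    (∀ p, σ (AdjoinRoot.of _ p) = AdjoinRoot.of _ p) ∧
    σ (AdjoinRoot.root _) = AdjoinRoot.of _ (C ζ) * AdjoinRoot.root _ := by
  refine ⟨AdjoinRoot.lift (AdjoinRoot.of _) (AdjoinRoot.of _ (C ζ) * AdjoinRoot.root _) ?_, ?_, ?_⟩
  · rw [eval₂_sub, eval₂_pow, eval₂_X, eval₂_C, mul_pow, curve_rel, ← map_pow, ← C_pow, hζ]
    simp
  · intro p; exact AdjoinRoot.lift_of _
  · exact AdjoinRoot.lift_root _

theorem exists_point (b e : K) (h : e ^ d = f.eval b) : ∃ ε : CurveRing K d f →+* K,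
    (∀ p, ε (AdjoinRoot.of _ p) = p.eval b) ∧ ε (AdjoinRoot.root _) = e := by
  refine ⟨AdjoinRoot.lift (evalRingHom b) e ?_, ?_, ?_⟩
  · simp [h]
  · intro p; exact AdjoinRoot.lift_of _
  · exact AdjoinRoot.lift_root _

theorem pow_span_pair {A : Type*} [CommRing A] (s t : A) (k : ℕ) :
    (Ideal.span {s, t}) ^ k ≤ Ideal.span {s, t ^ k} := by
  induction k with
  | zero =>
    have : (1 : A) ∈ Ideal.span {s, t ^ 0} := Ideal.subset_span (by simp)
    rw [(Ideal.eq_top_iff_one _).2 this]; exact le_top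
  | succ k ih =>
    rw [pow_succ]
    refine (Ideal.mul_mono_left ih).trans ?_
    rw [Ideal.span_pair_mul_span_pair, Ideal.span_le]
    have h1 : s ∈ Ideal.span {s, t ^ (k+1)} := Ideal.subset_span (by simp)
    have h2 : t ^ k * t ∈ Ideal.span {s, t ^ (k+1)} := Ideal.subset_span (by simp [pow_succ])
    rintro z (rfl | rfl | rfl | rfl)
    · exact Ideal.mul_mem_left _ _ h1
    · exact Ideal.mul_mem_right _ _ h1
    · exact Ideal.mul_mem_left _ _ h1
    · exact h2

theorem main_bound [IsAlgClosed K] [IsDomain (CurveRing K d f)]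
    (hd : 2 ≤ d) (hgcd : Nat.gcd n d = 1) (hchar : ¬ (ringChar K ∣ d))
    (hdeg : f.natDegree = n) (hf : f ≠ 0)
    (a c : K) (hP : c ^ d = f.eval a) (hc : c ≠ 0) (k : ℕ) (hk : 0 < k)
    (G : ℕ → K[X])
    (hG : ptIdeal d f a c ^ k = Ideal.span
      {∑ i ∈ Finset.range d, AdjoinRoot.of _ (G i) * AdjoinRoot.root _ ^ i}) :
    (∀ i < d, G i ≠ 0 → d * (G i).natDegree + n * i ≤ k) ∧ ∃ i < d, 0 < i ∧ G i ≠ 0 := by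
  have hd0 : 0 < d := by omega
  have hdK : (d : K) ≠ 0 := fun h => hchar ((ringChar.spec K d).1 h)
  have : NeZero (d : K) := ⟨hdK⟩
  set g := ∑ i ∈ Finset.range d, AdjoinRoot.of ((X : K[X][X]) ^ d - C f) (G i)
    * AdjoinRoot.root _ ^ i with hg
  obtain ⟨ζ₀, hζ₀⟩ := HasEnoughRootsOfUnity.exists_primitiveRoot K d
  have hσ : ∀ ζ : K, ∃ σ : CurveRing K d f →+* CurveRing K d f, ζ ^ d = 1 →
    (∀ p, σ (AdjoinRoot.of _ p) = AdjoinRoot.of _ p) ∧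
    σ (AdjoinRoot.root _) = AdjoinRoot.of _ (C ζ) * AdjoinRoot.root _ := by
    intro ζ
    by_cases h : ζ ^ d = 1
    · obtain ⟨σ, h⟩ := exists_twist (f := f) ζ h
      exact ⟨σ, fun _ => h⟩
    · exact ⟨RingHom.id _, fun h' => absurd h' h⟩
  choose σ hσ using hσ
  -- the ideal generated by a conjugate
  have hspan : ∀ ζ : K, ζ ^ d = 1 → Ideal.span {σ ζ g} = (Ideal.span {AdjoinRoot.of _ (X - C a),
      AdjoinRoot.of _ (C ζ) * AdjoinRoot.root _ - AdjoinRoot.of _ (C c)}) ^ k := by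
    intro ζ hζ
    obtain ⟨h1, h2⟩ := hσ ζ hζ
    have := congrArg (Ideal.map (σ ζ)) hG
    rw [Ideal.map_pow, ptIdeal, Ideal.map_span, Ideal.map_span, Set.image_pair,
      Set.image_singleton, h1, map_sub (σ ζ), h1, h2] at this
    exact this.symm
  have hcop : ∀ ζ ζ' : K, ζ ^ d = 1 → ζ' ^ d = 1 → ζ ≠ ζ' → IsCoprime (σ ζ g) (σ ζ' g) := by
    intro ζ ζ' hζ hζ' hne
    rw [← Ideal.isCoprime_span_singleton_iff, hspan ζ hζ, hspan ζ' hζ']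
    apply IsCoprime.pow
    rw [Ideal.isCoprime_iff_exists]
    have hu : (ζ - ζ') * c ≠ 0 := mul_ne_zero (sub_ne_zero.2 hne) hc
    set r := ((ζ - ζ') * c)⁻¹ with hr
    refine ⟨AdjoinRoot.of _ (C (r * ζ')) * (AdjoinRoot.of _ (C ζ) * AdjoinRoot.root _ -
      AdjoinRoot.of _ (C c)), Ideal.mul_mem_left _ _ (Ideal.subset_span (by simp)),
      AdjoinRoot.of _ (C (-(r * ζ))) * (AdjoinRoot.of _ (C ζ') * AdjoinRoot.root _ -
      AdjoinRoot.of _ (C c)), Ideal.mul_mem_left _ _ (Ideal.subset_span (by simp)), ?_⟩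
    have e : AdjoinRoot.of ((X : K[X][X]) ^ d - C f) (C (r * ((ζ - ζ') * c))) = 1 := by
      rw [hr, inv_mul_cancel₀ hu]; simp
    rw [← e]
    simp only [map_mul, map_sub, map_neg]
    ring
  have hsig : ∀ ζ : K, ζ ^ d = 1 → σ ζ g = ∑ i ∈ Finset.range d,
      AdjoinRoot.of _ (C (ζ ^ i) * G i) * AdjoinRoot.root _ ^ i := by
    intro ζ hζ
    obtain ⟨h1, h2⟩ := hσ ζ hζ
    rw [hg, map_sum]
    refine Finset.sum_congr rfl fun i _ => ?_
    rw [map_mul, map_pow, h1, h2, mul_pow, map_mul, ← map_pow, ← C_pow]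
    ring
  have hinj : Function.Injective (AdjoinRoot.of ((X : K[X][X]) ^ d - C f)) := by
    apply AdjoinRoot.of.injective_of_degree_ne_zero
    rw [degree_X_pow_sub_C hd0]
    exact_mod_cast hd0.ne'
  obtain ⟨ε, hε1, hε2⟩ := exists_point (f := f) a c hP
  have hgunit : ¬ IsUnit g := by
    intro hu
    rw [Ideal.span_singleton_eq_top.2 hu] at hG
    have h1 : (1 : CurveRing K d f) ∈ ptIdeal d f a c :=
      Ideal.pow_le_self hk.ne' (hG ▸ Submodule.mem_top)
    have h2 : ptIdeal d f a c ≤ RingHom.ker ε := by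
      rw [ptIdeal, Ideal.span_le]
      rintro z (rfl | rfl)
      · simp [RingHom.mem_ker, hε1]
      · simp [RingHom.mem_ker, hε1, hε2]
    have := h2 h1
    simp [RingHom.mem_ker] at this
  have hxa0 : AdjoinRoot.of ((X : K[X][X]) ^ d - C f) (X - C a) ≠ 0 := by
    rw [Ne, map_eq_zero_iff _ hinj]; exact X_sub_C_ne_zero a
  constructor
  · obtain ⟨Γ, _, v, hv0, hvC, hvX⟩ := exists_val _ hinj
    have hdvd : ∏ ζ ∈ nthRootsFinset d (1 : K), σ ζ g ∣
        (AdjoinRoot.of ((X : K[X][X]) ^ d - C f) (X - C a)) ^ k := by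
      apply Finset.prod_dvd_of_coprime
      · intro ζ hζ ζ' hζ' hne
        exact hcop ζ ζ' ((mem_nthRootsFinset hd0 _).1 hζ) ((mem_nthRootsFinset hd0 _).1 hζ') hne
      · intro ζ hζ
        rw [← Ideal.mem_span_singleton, hspan ζ ((mem_nthRootsFinset hd0 _).1 hζ)]
        exact Ideal.pow_mem_pow (Ideal.subset_span (by simp)) k
    obtain ⟨h, hh⟩ := hdvd
    have hh0 : h ≠ 0 := by
      rintro rfl
      rw [mul_zero] at hh
      exact pow_ne_zero k hxa0 hh
    have hv1 := one_le_val hd hdeg hf hgcd v hvC hvX h hh0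
    have hvs : ∀ ζ ∈ nthRootsFinset d (1 : K), v (σ ζ g) = v g := by
      intro ζ hζ
      have hζ := (mem_nthRootsFinset hd0 _).1 hζ
      have hz0 : ζ ≠ 0 := by rintro rfl; simp [hd0.ne'] at hζ
      rw [hsig ζ hζ, hg, val_sum hd hdeg hf hgcd v hvC hvX, val_sum hd hdeg hf hgcd v hvC hvX]
      congr 1
      funext i
      rw [map_mul v, map_mul v, map_mul (AdjoinRoot.of _), map_mul v, hvC _ (pow_ne_zero i hz0), one_mul]
    have hle : v g ^ d ≤ v (AdjoinRoot.of _ X) ^ k := by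
      have e := congrArg v hh
      rw [map_mul, map_prod, Finset.prod_congr rfl hvs, Finset.prod_const,
        hζ₀.card_nthRootsFinset, map_pow, val_poly _ v hvC hvX _ (X_sub_C_ne_zero a),
        natDegree_X_sub_C, pow_one] at e
      rw [e]
      exact le_mul_of_one_le_right zero_le hv1
    intro i hi hGi
    have := (le_val hd hdeg hf hgcd v hvC hvX G i hi hGi).trans hle
    exact (pow_le_pow_iff_right₀ hvX).1 this
  · by_contra! hcon
    have hfix : ∀ ζ : K, ζ ^ d = 1 → σ ζ g = g := by
      intro ζ hζ
      rw [hsig ζ hζ, hg]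
      refine Finset.sum_congr rfl fun i hi => ?_
      rcases Nat.eq_zero_or_pos i with rfl | hi0
      · simp
      · rw [hcon i (by simpa using hi) hi0]; simp
    have := hcop ζ₀ 1 hζ₀.pow_eq_one (one_pow d) (hζ₀.ne_one (by omega))
    rw [hfix _ hζ₀.pow_eq_one, hfix _ (one_pow d)] at this
    exact hgunit (isCoprime_self.1 this)

end

theorem case_zero {K : Type*} [Field K] {d : ℕ} {f : K[X]} (hd : 2 ≤ d)
    (hsqf : Squarefree f) (a : K) (hP : (0 : K) ^ d = f.eval a) :
    (ptIdeal d f a 0 ^ d).IsPrincipal := by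
  rw [zero_pow (by omega)] at hP
  obtain ⟨q, hq⟩ := dvd_iff_isRoot.2 (show f.IsRoot a from hP.symm)
  have hqa : ¬ (X - C a) ∣ q := by
    rintro ⟨r, rfl⟩
    have := hsqf (X - C a) ⟨r, by rw [hq]; ring⟩
    exact not_isUnit_X_sub_C a this
  have hcop : IsCoprime ((X - C a) ^ (d - 1)) q :=
    IsCoprime.pow_left ((irreducible_X_sub_C a).coprime_iff_not_dvd.2 hqa)
  obtain ⟨s, t, hst⟩ := hcop
  set x := AdjoinRoot.of ((X : K[X][X]) ^ d - C f) (X - C a) with hx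
  set y := AdjoinRoot.root ((X : K[X][X]) ^ d - C f) with hy
  have hyd : y ^ d = x * AdjoinRoot.of _ q := by rw [hy, curve_rel, hx, ← map_mul, ← hq]
  have hpt : ptIdeal d f a 0 = Ideal.span {x, y} := by
    rw [ptIdeal]; simp [hx, hy]
  refine ⟨⟨x, ?_⟩⟩
  change _ = Ideal.span {x}
  rw [hpt]
  apply le_antisymm
  · refine (pow_span_pair x y d).trans ?_
    rw [Ideal.span_le]
    rintro z (rfl | rfl)
    · exact Ideal.subset_span rfl
    · exact Ideal.mem_span_singleton.2 ⟨_, hyd⟩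
  · rw [Ideal.span_singleton_le_iff_mem]
    have e : x = AdjoinRoot.of _ s * x ^ d + AdjoinRoot.of _ t * y ^ d := by
      have h1 := congrArg (fun z => x * AdjoinRoot.of ((X : K[X][X]) ^ d - C f) z) hst
      simp only [map_add, map_mul, map_pow, map_one, mul_one] at h1
      rw [← hx] at h1
      rw [hyd]
      have h2 : x ^ d = x * x ^ (d - 1) := by rw [← pow_succ']; congr 1; omega
      rw [h2]
      linear_combination -h1
    have hx1 : x ∈ Ideal.span {x, y} := Ideal.subset_span (by simp)
    have hy1 : y ∈ Ideal.span {x, y} := Ideal.subset_span (by simp)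
    have hm := add_mem (Ideal.mul_mem_left _ (AdjoinRoot.of _ s) (Ideal.pow_mem_pow hx1 d))
      (Ideal.mul_mem_left _ (AdjoinRoot.of _ t) (Ideal.pow_mem_pow hy1 d))
    rwa [← e] at hm

theorem forward_eq {K : Type*} [Field K] [IsAlgClosed K] {d n : ℕ} {f : K[X]} (hd : 2 ≤ d)
    (hdn : d < n) (hmonic : f.Monic) (hdeg : f.natDegree = n)
    (a c : K) (v : K[X]) (hv : d * v.natDegree ≤ n - 1)
    (h : AdjoinRoot.root _ - AdjoinRoot.of _ v ∣
      (AdjoinRoot.of ((X : K[X][X]) ^ d - C f) (X - C a)) ^ n) :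
    f = (X - C a) ^ n + v ^ d := by
  have hlt : (v ^ d).degree < f.degree := by
    apply degree_lt_degree
    rw [natDegree_pow, hdeg]; omega
  have hm : (f - v ^ d).Monic := hmonic.sub_of_left hlt
  have hdg : (f - v ^ d).natDegree = n := by
    rw [natDegree_sub_eq_left_of_natDegree_lt, hdeg]
    rw [natDegree_pow, hdeg]; omega
  have hroots : ∀ b ∈ (f - v ^ d).roots, b = a := by
    intro b hb
    have hb' : (v.eval b) ^ d = f.eval b := by
      have := isRoot_of_mem_roots hb
      simp [IsRoot, sub_eq_zero] at this
      exact this.symm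
    obtain ⟨ε, h1, h2⟩ := exists_point (f := f) b (v.eval b) hb'
    have h3 := map_dvd ε h
    rw [map_sub, h1, h2, sub_self, map_pow, h1, zero_dvd_iff] at h3
    have := pow_eq_zero_iff (by omega) |>.1 h3
    simpa [sub_eq_zero] using this
  have hs := IsAlgClosed.splits (f - v ^ d)
  have e := hs.eq_prod_roots_of_monic hm
  have hcard : (f - v ^ d).roots.card = n := by rw [← hs.natDegree_eq_card_roots, hdg]
  rw [Multiset.eq_replicate.2 ⟨hcard, hroots⟩] at e
  simp only [Multiset.map_replicate, Multiset.prod_replicate] at e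
  rw [← e]; ring

theorem backward {K : Type*} [Field K] {d n : ℕ} {f : K[X]}
    (hd : 2 ≤ d) (hdK : (d : K) ≠ 0) (a c : K) (hP : c ^ d = f.eval a) (hc : c ≠ 0)
    (v : K[X]) (hva : v.eval a = c) (hf : f = (X - C a) ^ n + v ^ d) :
    (ptIdeal d f a c ^ n).IsPrincipal := by
  set x := AdjoinRoot.of ((X : K[X][X]) ^ d - C f) (X - C a) with hx
  set y := AdjoinRoot.root ((X : K[X][X]) ^ d - C f) with hy
  set V := AdjoinRoot.of ((X : K[X][X]) ^ d - C f) v with hV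
  set u := ∑ i ∈ Finset.range d, y ^ i * V ^ (d - 1 - i) with hu
  have hrel : x ^ n = u * (y - V) := by
    rw [hu, (Commute.all y V).geom_sum₂_mul, hy, curve_rel, hV, hx, ← map_pow, ← map_pow,
      ← map_sub]
    congr 1
    linear_combination -hf
  obtain ⟨q, hq⟩ : X - C a ∣ v - C c := dvd_iff_isRoot.2 (by simp [IsRoot, hva])
  have hq' : V - AdjoinRoot.of _ (C c) = x * AdjoinRoot.of _ q := by
    rw [hV, hx, ← map_sub, ← map_mul, hq]
  have hpt : ptIdeal d f a c = Ideal.span {y - V, x} := by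
    rw [ptIdeal]
    apply le_antisymm
    · rw [Ideal.span_le]
      rintro z (rfl | rfl)
      · exact Ideal.subset_span (by simp [hx])
      · exact Ideal.mem_span_pair.2 ⟨1, AdjoinRoot.of _ q, by linear_combination -hq'⟩
    · rw [Ideal.span_le]
      rintro z (rfl | rfl)
      · exact Ideal.mem_span_pair.2 ⟨-AdjoinRoot.of _ q, 1, by
          rw [← hx]; linear_combination hq'⟩
      · exact Ideal.subset_span (by simp [hx])
  obtain ⟨ε, hε1, hε2⟩ := exists_point (f := f) a c hP
  -- `u` is invertible modulo the ideal
  have hmod : ∀ z, z - AdjoinRoot.of _ (C (ε z)) ∈ ptIdeal d f a c := by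
    intro z
    obtain ⟨p, rfl⟩ := AdjoinRoot.mk_surjective z
    induction p using Polynomial.induction_on' with
    | add p q hp hq =>
      have := add_mem hp hq
      convert this using 1
      simp only [map_add]; ring
    | monomial m r =>
      have e1 : AdjoinRoot.mk ((X : K[X][X]) ^ d - C f) (monomial m r)
          = AdjoinRoot.of _ r * y ^ m := by
        rw [← C_mul_X_pow_eq_monomial]; simp [hy]
      rw [e1, map_mul, map_pow, hε1, hε2, ← Ideal.Quotient.eq]
      have hy2 : Ideal.Quotient.mk (ptIdeal d f a c) y
          = Ideal.Quotient.mk (ptIdeal d f a c) (AdjoinRoot.of _ (C c)) := by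
        rw [Ideal.Quotient.eq]; exact Ideal.subset_span (by simp [hy])
      have hr2 : Ideal.Quotient.mk (ptIdeal d f a c) (AdjoinRoot.of _ r)
          = Ideal.Quotient.mk (ptIdeal d f a c) (AdjoinRoot.of _ (C (r.eval a))) := by
        rw [Ideal.Quotient.eq]
        obtain ⟨s, hs⟩ : X - C a ∣ r - C (r.eval a) := X_sub_C_dvd_sub_C_eval
        rw [← map_sub, hs, map_mul]
        exact Ideal.mul_mem_right _ _ (Ideal.subset_span (by simp))
      rw [map_mul, map_pow, hy2, hr2]
      simp only [map_mul, map_pow]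
  have hεu : ε u ≠ 0 := by
    have : ε u = d * c ^ (d - 1) := by
      rw [hu, map_sum]
      rw [Finset.sum_congr rfl (g := fun _ => c ^ (d - 1))]
      · simp
      · intro i hi
        have hi : i < d := by simpa using hi
        rw [map_mul, map_pow, map_pow, hε2, hV, hε1, hva, ← pow_add]
        congr 1; omega
    rw [this]
    exact mul_ne_zero hdK (pow_ne_zero _ hc)
  have hcop : IsCoprime (Ideal.span {u}) (ptIdeal d f a c ^ n) := by
    apply IsCoprime.pow_right
    rw [Ideal.isCoprime_iff_exists]
    refine ⟨u * AdjoinRoot.of _ (C (ε u)⁻¹), Ideal.mem_span_singleton.2 ⟨_, rfl⟩,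
      -(u - AdjoinRoot.of _ (C (ε u))) * AdjoinRoot.of _ (C (ε u)⁻¹),
      Ideal.mul_mem_right _ _ (neg_mem (hmod u)), ?_⟩
    have e : AdjoinRoot.of ((X : K[X][X]) ^ d - C f) (C (ε u)) * AdjoinRoot.of _ (C (ε u)⁻¹)
        = 1 := by
      rw [← map_mul, ← C_mul, mul_inv_cancel₀ hεu]; simp
    linear_combination e
  refine ⟨⟨y - V, ?_⟩⟩
  change _ = Ideal.span {y - V}
  apply le_antisymm
  · rw [hpt]
    refine (pow_span_pair _ _ n).trans ?_
    rw [Ideal.span_le]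
    rintro z (rfl | rfl)
    · exact Ideal.subset_span rfl
    · exact Ideal.mem_span_singleton.2 ⟨u, by rw [hrel]; ring⟩
  · rw [Ideal.span_singleton_le_iff_mem]
    rw [Ideal.isCoprime_iff_exists] at hcop
    obtain ⟨s, hs, t, ht, hst⟩ := hcop
    obtain ⟨s, rfl⟩ := Ideal.mem_span_singleton.1 hs
    have hxn : x ^ n ∈ ptIdeal d f a c ^ n :=
      Ideal.pow_mem_pow (Ideal.subset_span (by simp [hx])) n
    have e : y - V = s * x ^ n + (y - V) * t := by
      rw [hrel]; linear_combination -(y - V) * hst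
    rw [e]
    exact add_mem (Ideal.mul_mem_left _ _ hxn) (Ideal.mul_mem_left _ _ ht)

theorem stmt_2 {K : Type*} [Field K] [IsAlgClosed K] (d n : ℕ)
    (hd : 2 ≤ d) (hdn : d < n) (hgcd : Nat.gcd n d = 1)
    (hchar : ¬ (ringChar K ∣ d))
    (f : K[X]) (hmonic : f.Monic) (hdeg : f.natDegree = n) (hsqf : Squarefree f)
    (hDed : IsDedekindDomain (CurveRing K d f))
    (a c : K) (hP : c ^ d = f.eval a) :
    IsTorsionOfOrder d f a c n ↔
      ∃ v : K[X], d * v.natDegree ≤ n - 1 ∧ f = (X - C a) ^ n + v ^ d := by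
  have hdK : (d : K) ≠ 0 := fun h => hchar ((ringChar.spec K d).1 h)
  have hf0 := hmonic.ne_zero
  constructor
  · rintro ⟨⟨hn0, hprin⟩, hmin⟩
    have hc : c ≠ 0 := by
      rintro rfl
      have : n ≤ d := hmin ⟨by omega, case_zero hd hsqf a hP⟩
      omega
    obtain ⟨g, hg⟩ := hprin.principal
    change _ = Ideal.span {g} at hg
    obtain ⟨G, rfl⟩ := curve_repr hd g
    obtain ⟨hb, i, hid, hi0, hGi⟩ := main_bound hd hgcd hchar hdeg hf0 a c hP hc n hn0 G hg
    have hone : ∀ j < d, 0 < j → G j ≠ 0 → j = 1 ∧ (G j).natDegree = 0 := by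
      intro j hj hj0 hGj
      have h1 := hb j hj hGj
      have h2 : j = 1 := by
        by_contra hne
        have : n * 2 ≤ n * j := Nat.mul_le_mul_left n (by omega)
        omega
      subst h2
      refine ⟨rfl, ?_⟩
      have : d * (G 1).natDegree = 0 := by omega
      rcases Nat.mul_eq_zero.1 this with h | h
      · omega
      · exact h
    obtain ⟨rfl, hG1⟩ := hone i hid hi0 hGi
    obtain ⟨β, hβ⟩ := natDegree_eq_zero.1 hG1
    have hβ0 : β ≠ 0 := by rintro rfl; simp at hβ; exact hGi hβ.symm
    have hsum : ∑ i ∈ Finset.range d, AdjoinRoot.of ((X : K[X][X]) ^ d - C f) (G i)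
        * AdjoinRoot.root _ ^ i = AdjoinRoot.of _ (G 0) + AdjoinRoot.of _ (C β) *
          AdjoinRoot.root _ := by
      obtain ⟨e, rfl⟩ : ∃ e, d = e + 2 := ⟨d - 2, by omega⟩
      rw [Finset.sum_range_succ', Finset.sum_range_succ', Finset.sum_eq_zero]
      · simp [← hβ]; ring
      · intro j hj
        have hj : j < e := by simpa using hj
        have : G (j + 1 + 1) = 0 := by
          by_contra hne
          have := (hone (j + 1 + 1) (by omega) (by omega) hne).1
          omega
        rw [this]; simp
    have hv : d * (C (-β⁻¹) * G 0).natDegree ≤ n - 1 := by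
      by_cases h0 : G 0 = 0
      · simp [h0]
      · rw [natDegree_C_mul (neg_ne_zero.2 (inv_ne_zero hβ0))]
        have h1 := hb 0 (by omega) h0
        have h2 : d * (G 0).natDegree ≠ n := by
          intro h
          have : d ∣ Nat.gcd n d := Nat.dvd_gcd ⟨_, h.symm⟩ dvd_rfl
          rw [hgcd, Nat.dvd_one] at this
          omega
        omega
    refine ⟨C (-β⁻¹) * G 0, hv, forward_eq hd hdn hmonic hdeg a c _ hv ?_⟩
    have hmem : (AdjoinRoot.of ((X : K[X][X]) ^ d - C f) (X - C a)) ^ n ∈ ptIdeal d f a c ^ n :=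
      Ideal.pow_mem_pow (Ideal.subset_span (by simp)) n
    rw [hg, hsum, Ideal.mem_span_singleton] at hmem
    refine dvd_trans ⟨AdjoinRoot.of _ (C β), ?_⟩ hmem
    have e : AdjoinRoot.of ((X : K[X][X]) ^ d - C f) (C β) * AdjoinRoot.of _ (C β⁻¹) = 1 := by
      rw [← map_mul, ← C_mul, mul_inv_cancel₀ hβ0]; simp
    simp only [map_mul, map_neg]
    linear_combination -(AdjoinRoot.of ((X : K[X][X]) ^ d - C f) (G 0)) * e
  · rintro ⟨v, hv, hfv⟩
    have hn0 : 0 < n := by omega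
    have hva : v.eval a ^ d = c ^ d := by
      rw [hP, hfv]; simp [hn0.ne']
    have hc : c ≠ 0 := by
      rintro rfl
      have hv0 : v.eval a = 0 := by
        rw [zero_pow (by omega)] at hva
        exact pow_eq_zero_iff (by omega) |>.1 hva
      have hdv : X - C a ∣ v := dvd_iff_isRoot.2 hv0
      have : (X - C a) * (X - C a) ∣ f := by
        rw [hfv, ← pow_two]
        exact dvd_add (pow_dvd_pow _ (by omega)) ((pow_dvd_pow _ hd).trans (pow_dvd_pow_of_dvd hdv d))
      exact not_isUnit_X_sub_C a (hsqf _ this)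
    have hva0 : v.eval a ≠ 0 := by
      intro h
      rw [h, zero_pow (by omega)] at hva
      exact pow_ne_zero d hc hva.symm
    refine ⟨⟨hn0, backward hd hdK a c hP hc (C (c / v.eval a) * v) ?_ ?_⟩, ?_⟩
    · simp [hva0]
    · rw [mul_pow, ← C_pow, div_pow, hva, div_self (pow_ne_zero d hc)]
      simpa using hfv
    · rintro k ⟨hk0, hprin⟩
      obtain ⟨g, hg⟩ := hprin.principal
      change _ = Ideal.span {g} at hg
      obtain ⟨G, rfl⟩ := curve_repr hd g
      obtain ⟨hb, i, hid, hi0, hGi⟩ := main_bound hd hgcd hchar hdeg hf0 a c hP hc k hk0 G hg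
      have h1 := hb i hid hGi
      have h2 : n * 1 ≤ n * i := Nat.mul_le_mul_left n hi0
      omega
end

section
/- Let P = (a,c) be a K-point of the affine curve y^d = f(x) which is a torsion point of order m, where m > 1 and m ≠ d (i.e., m is the least positive integer with m_P^m principal). Then c ≠ 0, the d maximal ideals m_{(a,ζc)} = (X − a, Y − ζc), as ζ ranges over the d-th roots of unity in K, are pairwise distinct, and each point (a, ζc) is also a torsion point of order m. Consequently, the number of torsion points of order m on the curve is divisible by d. -/
open Polynomial

theorem exists_val_s3 {K L : Type*} [Field K] [IsAlgClosed K] [Field L] [Algebra K L] (x : L)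
    (hx : x ∉ (algebraMap K L).range) :
    ∃ (V : ValuationSubring L), (∀ k : K, k ≠ 0 → V.valuation (algebraMap K L k) = 1) ∧
      1 < V.valuation x := by
  have : IsIntegrallyClosedIn (algebraMap K L).range L := by
    rw [Subring.isIntegrallyClosedIn_iff]
    intro z hz
    have hz' : IsIntegral K z := by
      obtain ⟨p, hp, hpz⟩ := hz
      obtain ⟨q, hq, -, hqm⟩ := Polynomial.lifts_and_natDegree_eq_and_monic
        (f := (algebraMap K L).rangeRestrict) (p := p) (by
          rw [Polynomial.lifts_iff_coeff_lifts]
          intro n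
          exact RingHom.rangeRestrict_surjective _ _) hp
      refine ⟨q, hqm, ?_⟩
      rw [← hq, eval₂_map] at hpz
      exact hpz
    have := minpoly.mem_range_of_degree_eq_one K z
      (IsAlgClosed.degree_eq_one_of_irreducible K (minpoly.irreducible hz'))
    exact this
  obtain ⟨V, h1, h2⟩ := Subring.exists_le_valuationSubring_of_isIntegrallyClosedIn hx
  refine ⟨V, fun k hk => ?_, ?_⟩
  · have a1 : V.valuation (algebraMap K L k) ≤ 1 :=
      (V.valuation_le_one_iff _).2 (h1 ⟨k, rfl⟩)
    have a2 : V.valuation (algebraMap K L k⁻¹) ≤ 1 :=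
      (V.valuation_le_one_iff _).2 (h1 ⟨k⁻¹, rfl⟩)
    apply le_antisymm a1
    by_contra! h
    have : V.valuation (algebraMap K L k) * V.valuation (algebraMap K L k⁻¹) = 1 := by
      rw [← map_mul, ← map_mul, mul_inv_cancel₀ hk]; simp
    have h3 := mul_lt_one_of_lt_of_le h a2
    exact h3.ne this
  · rw [← not_le, V.valuation_le_one_iff]; exact h2

theorem modulus_monic {K : Type*} [Field K] (d : ℕ) (hd : 2 ≤ d) (f : K[X]) :
    ((X : K[X][X]) ^ d - C f).Monic := monic_X_pow_sub_C f (by omega)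

theorem of_inj {K : Type*} [Field K] (d : ℕ) (hd : 2 ≤ d) (f : K[X]) :
    Function.Injective (AdjoinRoot.of ((X : K[X][X]) ^ d - C f)) := by
  apply AdjoinRoot.of.injective_of_degree_ne_zero
  rw [degree_X_pow_sub_C (by omega)]
  intro h
  have : d = 0 := by exact_mod_cast h
  omega

theorem reduced_rep {K : Type*} [Field K] (d : ℕ) (hd : 2 ≤ d) (f : K[X]) (g : CurveRing K d f) :
    ∃ p : K[X][X], p.natDegree < d ∧ AdjoinRoot.mk _ p = g := by
  have hm := modulus_monic d hd f
  refine ⟨AdjoinRoot.modByMonicHom hm g, ?_, AdjoinRoot.mk_leftInverse hm g⟩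
  obtain ⟨q, rfl⟩ := AdjoinRoot.mk_surjective g
  rw [AdjoinRoot.modByMonicHom_mk]
  have := natDegree_modByMonic_lt q hm (by
    intro h
    have h2 := congrArg natDegree h
    rw [natDegree_X_pow_sub_C, natDegree_one] at h2; omega)
  rwa [natDegree_X_pow_sub_C] at this

theorem exists_val_curve {K : Type*} [Field K] [IsAlgClosed K] (d n : ℕ)
    (hd : 2 ≤ d) (hdn : d < n) (hgcd : Nat.gcd n d = 1)
    (f : K[X]) (hmonic : f.Monic) (hdeg : f.natDegree = n) [IsDomain (CurveRing K d f)] :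
    ∃ (M : CurveRing K d f → ℕ), (∀ g h, g ≠ 0 → h ≠ 0 → M (g * h) = M g + M h) ∧
      (∀ a : K, M (AdjoinRoot.of _ (X - C a)) = d) ∧
      (∀ g, g ≠ 0 → M g < d → M g = 0 ∧ ∃ k : K, g = AdjoinRoot.of _ (C k)) := by
  classical
  let A := CurveRing K d f
  let L := FractionRing A
  let ι : A →+* L := algebraMap A L
  have hι : Function.Injective ι := IsFractionRing.injective A L
  let x : L := ι (AdjoinRoot.of _ X)
  let y : L := ι (AdjoinRoot.root _)
  letI : Algebra K L := ((ι.comp (AdjoinRoot.of _)).comp C).toAlgebra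
  have halg : ∀ k : K, algebraMap K L k = ι (AdjoinRoot.of _ (C k)) := fun k => rfl
  have hx : x ∉ (algebraMap K L).range := by
    rintro ⟨k, hk⟩
    rw [halg] at hk
    have := of_inj d hd f (hι hk)
    have h2 := congrArg natDegree this
    simp at h2
  obtain ⟨V, hV1, hV2⟩ := exists_val_s3 x hx
  have : V.valuation.IsTrivialOn K := ⟨hV1⟩
  set v := V.valuation with hv
  have hae : ∀ p : K[X], ι (AdjoinRoot.of _ p) = aeval x p := by
    intro p
    have : (ι.comp (AdjoinRoot.of _)) = (aeval (R := K) x).toRingHom := by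
      apply Polynomial.ringHom_ext
      · intro k; simp [halg]
      · simp [x]
    exact congrArg (fun φ => φ p) this
  have hpoly : ∀ p : K[X], p ≠ 0 → v (aeval x p) = v x ^ p.natDegree := fun p hp =>
    valuation_aeval_eq_valuation_X_pow_natDegree_of_one_lt_valuation_X x hV2 hp
  have hy : v y ^ d = v x ^ n := by
    rw [← map_pow, ← hdeg, ← hpoly f hmonic.ne_zero, ← hae, ← map_pow]
    congr 2
    have := AdjoinRoot.mk_self (f := (X : K[X][X]) ^ d - C f)
    rw [map_sub, map_pow, AdjoinRoot.mk_X, AdjoinRoot.mk_C, sub_eq_zero] at this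
    exact this
  have hinj : ∀ i j, v x ^ i = v x ^ j → i = j := fun i j h =>
    (pow_right_strictMono₀ hV2).injective h
  -- key
  have key : ∀ g : A, g ≠ 0 → ∃ M : ℕ, v (ι g) ^ d = v x ^ M ∧
      (M < d → M = 0 ∧ ∃ k : K, g = AdjoinRoot.of _ (C k)) := by
    intro g hg
    obtain ⟨p, hpd, rfl⟩ := reduced_rep d hd f g
    have hp0 : p ≠ 0 := by rintro rfl; simp at hg
    have hsum : ι (AdjoinRoot.mk _ p) = ∑ i ∈ p.support, aeval x (p.coeff i) * y ^ i := by
      conv_lhs => rw [p.as_sum_support_C_mul_X_pow]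
      rw [map_sum, map_sum]
      refine Finset.sum_congr rfl fun i _ => ?_
      rw [map_mul, map_mul, map_pow, map_pow, AdjoinRoot.mk_C, AdjoinRoot.mk_X, hae]
    let w : ℕ → ℕ := fun i => d * (p.coeff i).natDegree + n * i
    have hw : ∀ i ∈ p.support, v (aeval x (p.coeff i) * y ^ i) ^ d = v x ^ w i := by
      intro i hi
      rw [map_mul, hpoly _ (mem_support_iff.1 hi), map_pow, mul_pow, ← pow_mul, ← pow_mul,
        mul_comm i d, pow_mul (v y), hy, ← pow_mul, ← pow_add, mul_comm _ d]
    obtain ⟨j, hj, hjmax⟩ := Finset.exists_max_image p.support w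
      (nonempty_support_iff.2 hp0)
    have hlt : ∀ i ∈ p.support, i < d := fun i hi => (le_natDegree_of_mem_supp i hi).trans_lt hpd
    have hwinj : ∀ i ∈ p.support, w i = w j → i = j := by
      intro i hi h
      have h1 : n * i ≡ n * j [MOD d] := by
        have : (w i) % d = (w j) % d := by rw [h]
        simpa [w, Nat.ModEq, Nat.mul_add_mod] using this
      have h2 : i ≡ j [MOD d] := Nat.ModEq.cancel_left_of_coprime (by rwa [Nat.gcd_comm]) h1
      exact Nat.ModEq.eq_of_lt_of_lt h2 (hlt i hi) (hlt j hj)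
    refine ⟨w j, ?_, ?_⟩
    · rw [hsum, Valuation.map_sum_eq_of_lt v hj, hw j hj]
      intro i hi
      rw [Finset.mem_sdiff, Finset.mem_singleton] at hi
      have h1 : w i < w j := lt_of_le_of_ne (hjmax i hi.1) (fun h => hi.2 (hwinj i hi.1 h))
      have h2 := (pow_right_strictMono₀ hV2) h1
      simp only at h2
      rw [← hw i hi.1, ← hw j hj] at h2
      exact lt_of_pow_lt_pow_left₀ d zero_le h2
    · intro hwd
      have small : ∀ i ∈ p.support, i = 0 ∧ (p.coeff i).natDegree = 0 := by
        intro i hi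
        have h1 := (hjmax i hi).trans_lt hwd
        simp only [w] at h1
        constructor
        · by_contra h
          have : n * 1 ≤ n * i := Nat.mul_le_mul_left _ (by omega)
          omega
        · by_contra h
          have : d * 1 ≤ d * (p.coeff i).natDegree := Nat.mul_le_mul_left _ (by omega)
          omega
      obtain ⟨hj0, hjd⟩ := small j hj
      subst hj0
      refine ⟨by simp [w, hjd], (p.coeff 0).coeff 0, ?_⟩
      rw [← eq_C_of_natDegree_eq_zero hjd, ← AdjoinRoot.mk_C, ← eq_C_of_natDegree_eq_zero]
      rw [natDegree_eq_zero_iff_degree_le_zero, degree_le_iff_coeff_zero]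
      intro i hi
      by_contra h
      have := (small i (mem_support_iff.2 h)).1
      subst this
      simp at hi
  choose! M hM using key
  refine ⟨M, ?_, ?_, fun g hg => (hM g hg).2⟩
  · intro g h hg hh
    apply hinj
    rw [← (hM _ (mul_ne_zero hg hh)).1, pow_add, ← (hM g hg).1, ← (hM h hh).1, map_mul, map_mul,
      mul_pow]
  · intro a
    apply hinj
    rw [← (hM _ _).1, hae, hpoly _ (X_sub_C_ne_zero a), natDegree_X_sub_C, pow_one]
    intro h
    exact X_sub_C_ne_zero a (of_inj d hd f (by rw [h, map_zero]))

theorem span_pair_pow_le {R : Type*} [CommRing R] (u y : R) (k : ℕ) :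
    Ideal.span {u, y} ^ k ≤ Ideal.span {u} ⊔ Ideal.span {y ^ k} := by
  induction k with
  | zero => simp
  | succ k ih =>
    rw [pow_succ]
    refine (Ideal.mul_mono_left ih).trans ?_
    rw [Ideal.span_insert, Ideal.sup_mul,
      Ideal.mul_sup (Ideal.span {y ^ k}), Ideal.span_singleton_mul_span_singleton (y ^ k) y,
      ← pow_succ]
    refine sup_le ?_ (sup_le ?_ le_sup_right)
    · exact le_sup_of_le_left Ideal.mul_le_left
    · exact le_sup_of_le_left Ideal.mul_le_right


theorem exists_evalHom {K : Type*} [Field K] (d : ℕ) (f : K[X]) (a c : K)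
    (hP : c ^ d = f.eval a) : ∃ φ : CurveRing K d f →+* K,
      (∀ p, φ (AdjoinRoot.of _ p) = p.eval a) ∧ φ (AdjoinRoot.root _) = c ∧
      ∀ z ∈ ptIdeal d f a c, φ z = 0 := by
  let φ : CurveRing K d f →+* K := AdjoinRoot.lift (evalRingHom a) c (by simp [hP])
  have h1 : ∀ p, φ (AdjoinRoot.of _ p) = p.eval a := fun p => by simp [φ]
  have h2 : φ (AdjoinRoot.root _) = c := by simp [φ]
  refine ⟨φ, h1, h2, ?_⟩
  have : ptIdeal d f a c ≤ RingHom.ker φ := by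
    rw [ptIdeal, Ideal.span_le]
    rintro z (rfl | rfl)
    · simp [RingHom.mem_ker, h1]
    · simp [RingHom.mem_ker, h1, h2]
  intro z hz
  exact this hz

theorem root_pow {K : Type*} [Field K] (d : ℕ) (f : K[X]) :
    (AdjoinRoot.root ((X : K[X][X]) ^ d - C f)) ^ d = AdjoinRoot.of _ f := by
  have := AdjoinRoot.mk_self (f := (X : K[X][X]) ^ d - C f)
  rwa [map_sub, map_pow, AdjoinRoot.mk_X, AdjoinRoot.mk_C, sub_eq_zero] at this

theorem principal_twist {K : Type*} [Field K] (d : ℕ) (f : K[X]) (a c ζ : K)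
    (hd : 2 ≤ d) (hζ : ζ ^ d = 1) (k : ℕ) (h : (ptIdeal d f a c ^ k).IsPrincipal) :
    (ptIdeal d f a (ζ * c) ^ k).IsPrincipal := by
  have hζ0 : ζ ≠ 0 := by rintro rfl; rw [zero_pow (by omega)] at hζ; exact zero_ne_one hζ
  let σ : CurveRing K d f →+* CurveRing K d f := AdjoinRoot.lift (AdjoinRoot.of _)
    (AdjoinRoot.of _ (C ζ⁻¹) * AdjoinRoot.root _) (by
      simp only [eval₂_sub, eval₂_X_pow, eval₂_C]
      rw [mul_pow, root_pow, ← map_pow, ← map_pow, inv_pow, hζ]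
      simp)
  have h1 : ∀ p, σ (AdjoinRoot.of _ p) = AdjoinRoot.of _ p := fun p => by simp [σ]
  have h2 : σ (AdjoinRoot.root _) = AdjoinRoot.of _ (C ζ⁻¹) * AdjoinRoot.root _ := by simp [σ]
  have hz : (AdjoinRoot.of ((X : K[X][X]) ^ d - C f) (C ζ)) * AdjoinRoot.of _ (C ζ⁻¹) = 1 := by
    rw [← map_mul, ← map_mul, mul_inv_cancel₀ hζ0]; simp
  have h3 : σ (AdjoinRoot.root _ - AdjoinRoot.of _ (C c)) =
      AdjoinRoot.of _ (C ζ⁻¹) * (AdjoinRoot.root _ - AdjoinRoot.of _ (C (ζ * c))) := by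
    rw [map_sub, h1, h2, map_mul, map_mul]
    linear_combination (AdjoinRoot.of ((X : K[X][X]) ^ d - C f) (C c)) * hz
  have hmap : (ptIdeal d f a c).map σ = ptIdeal d f a (ζ * c) := by
    rw [ptIdeal, Ideal.map_span, Set.image_pair, h1, h3, ptIdeal]
    apply le_antisymm
    · rw [Ideal.span_le]
      rintro z (rfl | rfl)
      · exact Ideal.subset_span (by simp)
      · exact Ideal.mul_mem_left _ _ (Ideal.subset_span (by simp))
    · rw [Ideal.span_le]
      rintro z (rfl | rfl)
      · exact Ideal.subset_span (by simp)
      · have : AdjoinRoot.of ((X : K[X][X]) ^ d - C f) (C ζ) * (AdjoinRoot.of _ (C ζ⁻¹) *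
            (AdjoinRoot.root _ - AdjoinRoot.of _ (C (ζ * c)))) =
            AdjoinRoot.root _ - AdjoinRoot.of _ (C (ζ * c)) := by
          rw [← mul_assoc, hz, one_mul]
        have h4 := Ideal.mul_mem_left (Ideal.span {AdjoinRoot.of ((X : K[X][X]) ^ d - C f) (X - C a),
          AdjoinRoot.of _ (C ζ⁻¹) * (AdjoinRoot.root _ - AdjoinRoot.of _ (C (ζ * c)))})
          (AdjoinRoot.of ((X : K[X][X]) ^ d - C f) (C ζ))
          (Ideal.subset_span (Set.mem_insert_of_mem _ (Set.mem_singleton _)))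
        rw [this] at h4
        exact h4
  rw [← hmap, ← Ideal.map_pow]
  obtain ⟨g, hg⟩ := h
  refine ⟨σ g, ?_⟩
  rw [hg]
  simp [Ideal.submodule_span_eq, Ideal.map_span]

theorem torsion_twist {K : Type*} [Field K] (d : ℕ) (f : K[X]) (a c ζ : K)
    (hd : 2 ≤ d) (hζ : ζ ^ d = 1) (m : ℕ) (h : IsTorsionOfOrder d f a c m) :
    IsTorsionOfOrder d f a (ζ * c) m := by
  have hζ0 : ζ ≠ 0 := by rintro rfl; rw [zero_pow (by omega)] at hζ; exact zero_ne_one hζ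
  refine ⟨⟨h.1.1, principal_twist d f a c ζ hd hζ m h.1.2⟩, ?_⟩
  rintro k ⟨hk, hk2⟩
  refine h.2 ⟨hk, ?_⟩
  have := principal_twist d f a (ζ * c) ζ⁻¹ hd (by rw [inv_pow, hζ, inv_one]) k hk2
  rwa [inv_mul_cancel_left₀ hζ0] at this

theorem pow_eq_of_zero {K : Type*} [Field K] (d : ℕ) (hd : 2 ≤ d)
    (f : K[X]) (hsqf : Squarefree f) (a : K) (hP : f.eval a = 0) :
    ptIdeal d f a 0 ^ d = Ideal.span {AdjoinRoot.of _ (X - C a)} := by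
  obtain ⟨q, hq⟩ := dvd_iff_isRoot.2 hP
  have hqa : IsCoprime (X - C a) q := by
    rw [(irreducible_X_sub_C a).coprime_iff_not_dvd]
    rintro ⟨r, rfl⟩
    exact (irreducible_X_sub_C a).not_isUnit (hsqf _ ⟨r, by rw [hq]; ring⟩)
  set ω := AdjoinRoot.of ((X : K[X][X]) ^ d - C f) with hω
  have hr : AdjoinRoot.root _ ^ d = ω (X - C a) * ω q := by rw [← map_mul, ← hq, root_pow]
  apply le_antisymm
  · refine (span_pair_pow_le _ _ d).trans ?_
    rw [sup_le_iff]
    refine ⟨le_rfl, ?_⟩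
    rw [Ideal.span_singleton_le_span_singleton]
    simp only [map_zero, sub_zero]
    rw [hr]
    exact dvd_mul_right _ _
  · rw [Ideal.span_singleton_le_iff_mem]
    obtain ⟨s, t, hst⟩ := (hqa.pow_left (m := d - 1))
    have e : ω (X - C a) = ω s * ω (X - C a) ^ d + ω t * AdjoinRoot.root _ ^ d := by
      rw [hr]
      have h1 := congrArg (fun z => ω (z * (X - C a))) hst
      simp only [map_add, map_mul, map_pow, one_mul] at h1
      have h2 : ω (X - C a) ^ d = ω (X - C a) ^ (d - 1) * ω (X - C a) := by
        rw [← pow_succ]; congr 1; omega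
      rw [h2]
      linear_combination -h1
    rw [e]
    refine add_mem (Ideal.mul_mem_left _ _ (Ideal.pow_mem_pow (Ideal.subset_span (by simp [hω])) _))
      (Ideal.mul_mem_left _ _ (Ideal.pow_mem_pow (Ideal.subset_span (by simp)) _))

theorem c_ne_zero {K : Type*} [Field K] [IsAlgClosed K] (d n : ℕ)
    (hd : 2 ≤ d) (hdn : d < n) (hgcd : Nat.gcd n d = 1)
    (f : K[X]) (hmonic : f.Monic) (hdeg : f.natDegree = n) (hsqf : Squarefree f)
    (hDed : IsDedekindDomain (CurveRing K d f))
    (a c : K) (hP : c ^ d = f.eval a)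
    (m : ℕ) (hmd : m ≠ d)
    (horder : IsTorsionOfOrder d f a c m) : c ≠ 0 := by
  rintro rfl
  have hpow := pow_eq_of_zero d hd f hsqf a (by rw [← hP, zero_pow (by omega)])
  obtain ⟨⟨hm0, g, hg⟩, hmin⟩ := horder
  have hle : m ≤ d := hmin ⟨by omega, ⟨_, hpow⟩⟩
  rw [Ideal.submodule_span_eq] at hg
  have hx0 : AdjoinRoot.of ((X : K[X][X]) ^ d - C f) (X - C a) ≠ 0 := fun h =>
    X_sub_C_ne_zero a (of_inj d hd f (by rw [h, map_zero]))
  have hbot : ptIdeal d f a 0 ≠ ⊥ := by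
    intro h
    rw [h, Ideal.bot_pow (by omega)] at hpow
    exact hx0 (Ideal.span_singleton_eq_bot.1 hpow.symm)
  obtain ⟨φ, h1, h2, h3⟩ := exists_evalHom d f a 0 hP
  have htop : ptIdeal d f a 0 ≠ ⊤ := by
    intro h
    have := h3 1 (by rw [h]; trivial)
    simp at this
  have hanti := Ideal.pow_right_strictAnti _ hbot htop
  have hdvd : g ∣ AdjoinRoot.of _ (X - C a) := by
    rw [← Ideal.span_singleton_le_span_singleton, ← hg, ← hpow]
    exact Ideal.pow_le_pow_right hle
  obtain ⟨h, hgh⟩ := hdvd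
  have hg0 : g ≠ 0 := by rintro rfl; rw [zero_mul] at hgh; exact hx0 hgh
  have hh0 : h ≠ 0 := by rintro rfl; rw [mul_zero] at hgh; exact hx0 hgh
  obtain ⟨M, hM1, hM2, hM3⟩ := exists_val_curve d n hd hdn hgcd f hmonic hdeg
  have hunit : ∀ z : CurveRing K d f, z ≠ 0 → M z < d → IsUnit z := by
    intro z hz hzd
    obtain ⟨-, k, rfl⟩ := hM3 z hz hzd
    have : k ≠ 0 := by rintro rfl; simp at hz
    exact ((IsUnit.mk0 k this).map C).map _
  have hsum : M g + M h = d := by rw [← hM1 g h hg0 hh0, ← hgh, hM2]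
  by_cases hc : M g < d
  · have hu := hunit g hg0 hc
    rw [Ideal.span_singleton_eq_top.2 hu] at hg
    have := hanti hm0
    simp only [pow_zero, hg, Ideal.one_eq_top] at this
    exact lt_irrefl _ this
  · have hu := hunit h hh0 (by omega)
    have : Ideal.span {AdjoinRoot.of ((X : K[X][X]) ^ d - C f) (X - C a)} = Ideal.span {g} := by
      rw [hgh]; exact Ideal.span_singleton_mul_right_unit hu g
    exact hmd (hanti.injective (hg.trans (this.symm.trans hpow.symm)))

theorem card_roots {K : Type*} [Field K] [IsAlgClosed K] (d : ℕ) (hd : 2 ≤ d)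
    (hchar : ¬ (ringChar K ∣ d)) (b : K) (hb : b ≠ 0) :
    {c : K | c ^ d = b}.ncard = d := by
  have hsep := separable_X_pow_sub_C' (ringChar K) d b hchar hb
  have h := card_rootSet_eq_natDegree (K := K) hsep (IsAlgClosed.splits _)
  rw [natDegree_X_pow_sub_C] at h
  have : {c : K | c ^ d = b} = (X ^ d - C b : K[X]).rootSet K := by
    ext z
    rw [mem_rootSet_of_ne (X_pow_sub_C_ne_zero (by omega) b)]
    simp [sub_eq_zero]
  rw [this, ← Nat.card_coe_set_eq, Nat.card_eq_fintype_card, h]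

theorem stmt_3 {K : Type*} [Field K] [IsAlgClosed K] (d n : ℕ)
    (hd : 2 ≤ d) (hdn : d < n) (hgcd : Nat.gcd n d = 1)
    (hchar : ¬ (ringChar K ∣ d))
    (f : K[X]) (hmonic : f.Monic) (hdeg : f.natDegree = n) (hsqf : Squarefree f)
    (hDed : IsDedekindDomain (CurveRing K d f))
    (a c : K) (hP : c ^ d = f.eval a)
    (m : ℕ) (hm : 1 < m) (hmd : m ≠ d)
    (horder : IsTorsionOfOrder d f a c m) :
    c ≠ 0 ∧
    (∀ ζ ζ' : K, ζ ^ d = 1 → ζ' ^ d = 1 →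
      ptIdeal d f a (ζ * c) = ptIdeal d f a (ζ' * c) → ζ = ζ') ∧
    (∀ ζ : K, ζ ^ d = 1 → IsTorsionOfOrder d f a (ζ * c) m) ∧
    d ∣ {P : K × K | P.2 ^ d = f.eval P.1 ∧ IsTorsionOfOrder d f P.1 P.2 m}.ncard := by
  have hne := c_ne_zero d n hd hdn hgcd f hmonic hdeg hsqf hDed a c hP m hmd horder
  refine ⟨hne, ?_, fun ζ hζ => torsion_twist d f a c ζ hd hζ m horder, ?_⟩
  · intro ζ ζ' hζ hζ' h
    obtain ⟨φ, h1, h2, h3⟩ := exists_evalHom d f a (ζ' * c) (by rw [mul_pow, hζ', one_mul, hP])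
    have : φ (AdjoinRoot.root _ - AdjoinRoot.of _ (C (ζ * c))) = 0 := by
      apply h3
      rw [← h]
      exact Ideal.subset_span (by simp)
    rw [map_sub, h1, h2, eval_C, sub_eq_zero] at this
    exact (mul_right_cancel₀ hne this).symm
  · classical
    set S := {P : K × K | P.2 ^ d = f.eval P.1 ∧ IsTorsionOfOrder d f P.1 P.2 m} with hS
    by_cases hfin : S.Finite
    swap
    · rw [Set.Infinite.ncard hfin]; exact dvd_zero d
    rw [Set.ncard_eq_toFinset_card S hfin, Finset.card_eq_sum_card_image Prod.fst]
    apply Finset.dvd_sum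
    intro b hb
    rw [Finset.mem_image] at hb
    obtain ⟨⟨b', e⟩, hbe, rfl⟩ := hb
    rw [Set.Finite.mem_toFinset] at hbe
    obtain ⟨he1, he2⟩ := hbe
    simp only at he1 he2 ⊢
    have he0 := c_ne_zero d n hd hdn hgcd f hmonic hdeg hsqf hDed b' e he1 m hmd he2
    have hcard := card_roots d hd hchar (e ^ d) (pow_ne_zero _ he0)
    have himg : ((({P ∈ hfin.toFinset | P.1 = b'} : Finset (K × K))) : Set (K × K)) =
        (fun z => (b', z)) '' {z : K | z ^ d = e ^ d} := by
      ext ⟨u, w⟩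
      simp only [Finset.coe_filter, Set.Finite.mem_toFinset, Set.mem_setOf_eq, Set.mem_image,
        Prod.mk.injEq, hS]
      constructor
      · rintro ⟨⟨h1, h2⟩, rfl⟩
        exact ⟨w, by rw [h1, he1], rfl, rfl⟩
      · rintro ⟨z, hz, rfl, rfl⟩
        refine ⟨⟨by rw [hz, he1], ?_⟩, rfl⟩
        have := torsion_twist d f b' e (z / e) hd
          (by rw [div_pow, hz, div_self (pow_ne_zero _ he0)]) m he2
        rwa [div_mul_cancel₀ _ he0] at this
    rw [← Set.ncard_coe_finset, himg, Set.ncard_image_of_injective _ (Prod.mk_right_injective b'),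
      hcard]
end

section
/- Let w ∈ K be a root of f. Then in the Dedekind domain A, the principal ideal generated by the image of X − w equals the d-th power of the maximal ideal m_{(w,0)} = (X − w, Y). -/
open Polynomial

theorem aux_pow {R : Type*} [CommRing R] (x y g : R) (d : ℕ) (hd : 1 ≤ d)
    (hy : y ^ d = x * g) (hc : IsCoprime x g) :
    Ideal.span {x} = Ideal.span {x, y} ^ d := by
  apply le_antisymm
  · rw [Ideal.span_singleton_le_iff_mem]
    obtain ⟨a, b, hab⟩ := hc.pow_left (m := d - 1)
    have hx : x = a * x ^ d + b * y ^ d := by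
      obtain ⟨e, rfl⟩ : ∃ e, d = e + 1 := ⟨d - 1, by omega⟩
      rw [hy]
      simp only [Nat.add_sub_cancel] at hab
      linear_combination (-x) * hab
    have h1 : x ^ d ∈ Ideal.span {x, y} ^ d :=
      Ideal.pow_mem_pow (Ideal.subset_span (by simp)) d
    have h2 : y ^ d ∈ Ideal.span {x, y} ^ d :=
      Ideal.pow_mem_pow (Ideal.subset_span (by simp)) d
    have h3 := Ideal.add_mem _ (Ideal.mul_mem_left _ a h1) (Ideal.mul_mem_left _ b h2)
    rwa [← hx] at h3
  · have h0 : Ideal.Quotient.mk (Ideal.span {x}) x = 0 :=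
      Ideal.Quotient.eq_zero_iff_mem.mpr (Ideal.mem_span_singleton_self x)
    have : Ideal.map (Ideal.Quotient.mk (Ideal.span {x})) (Ideal.span {x, y} ^ d) = ⊥ := by
      rw [Ideal.map_pow, Ideal.map_span, Set.image_pair, h0, Ideal.span_insert_zero,
        Ideal.span_singleton_pow, ← map_pow, hy, map_mul, h0, zero_mul]
      simp
    rw [Ideal.map_eq_bot_iff_le_ker, Ideal.mk_ker] at this
    exact this

theorem stmt_5 {K : Type*} [Field K] [IsAlgClosed K] (d n : ℕ)
    (hd : 2 ≤ d) (hdn : d < n) (hgcd : Nat.gcd n d = 1)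
    (hchar : ¬ (ringChar K ∣ d))
    (f : K[X]) (hmonic : f.Monic) (hdeg : f.natDegree = n) (hsqf : Squarefree f)
    (hDed : IsDedekindDomain (CurveRing K d f))
    (w : K) (hw : f.eval w = 0) :
    Ideal.span {AdjoinRoot.of ((X : K[X][X]) ^ d - C f) (X - C w)} =
      ptIdeal d f w 0 ^ d := by
  obtain ⟨g, hg⟩ := Polynomial.dvd_iff_isRoot.mpr hw
  have hc : IsCoprime (X - C w) g := by
    rw [(Polynomial.irreducible_X_sub_C w).coprime_iff_not_dvd]
    rintro ⟨k, hk⟩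
    exact (Polynomial.irreducible_X_sub_C w).not_isUnit
      (hsqf _ ⟨k, by rw [hg, hk, mul_assoc]⟩)
  have hy : AdjoinRoot.root ((X : K[X][X]) ^ d - C f) ^ d = AdjoinRoot.of _ f := by
    have := AdjoinRoot.eval₂_root ((X : K[X][X]) ^ d - C f)
    simpa [sub_eq_zero] using this
  unfold ptIdeal
  rw [C_0, map_zero, sub_zero]
  refine aux_pow _ _ (AdjoinRoot.of _ g) d (by omega) ?_
    (hc.map (AdjoinRoot.of ((X : K[X][X]) ^ d - C f)))
  rw [hy, ← map_mul, ← hg]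
end

section
/- Let ζ ∈ K be a primitive d-th root of unity and let σ : A → A be the ring automorphism of A that fixes K and the image of X and sends the image of Y to ζ·Y. Then for every nonzero ideal I of A, the product of the ideals σ^0(I)·σ^1(I)·…·σ^{d−1}(I) (the images of I under the iterates of σ) is a principal ideal of A. (This is the ideal-theoretic form of the statement that for every degree-zero divisor D on the smooth projective model, the divisor Σ_{i=0}^{d−1} ω^i D is principal, where ω is the order-d automorphism (x,y) ↦ (x,ζy).) -/
open Polynomial

lemma aux_prod_root {A : Type*} [CommRing A] [IsDomain A] {d : ℕ} (hd : 0 < d) {z : A}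
    (hz : IsPrimitiveRoot z d) (c y : A) :
    ∏ i ∈ Finset.range d, (c - z ^ i * y) = c ^ d - y ^ d := by
  classical
  rw [hz.pow_sub_pow_eq_prod_sub_mul c y hd]
  refine Finset.prod_nbij (fun i => z ^ i) ?_ ?_ ?_ (fun _ _ => rfl)
  · intro i _
    rw [Polynomial.mem_nthRootsFinset hd, ← pow_mul, mul_comm, pow_mul, hz.pow_eq_one, one_pow]
  · intro i hi j hj h
    exact hz.pow_inj (by simpa using hi) (by simpa using hj) h
  · intro w hw
    rw [Finset.mem_coe, Polynomial.mem_nthRootsFinset hd] at hw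
    have : NeZero d := ⟨hd.ne'⟩
    obtain ⟨i, hi, rfl⟩ := hz.eq_pow_of_pow_eq_one hw
    exact ⟨i, by simpa using hi, rfl⟩

lemma aux_prod_le {A ι : Type*} [CommRing A] (s : Finset ι) (x : A) (y : ι → A) :
    ∏ i ∈ s, Ideal.span {x, y i} ≤ Ideal.span {x, ∏ i ∈ s, y i} := by
  classical
  induction s using Finset.induction_on with
  | empty =>
    simp only [Finset.prod_empty, Ideal.one_eq_top, top_le_iff, Ideal.eq_top_iff_one]
    exact Ideal.subset_span (by simp)
  | insert a s ha ih =>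
    rw [Finset.prod_insert ha, Finset.prod_insert ha]
    refine (Ideal.mul_mono_right ih).trans ?_
    rw [Ideal.span_pair_mul_span_pair, Ideal.span_le]
    have hx : x ∈ Ideal.span {x, y a * ∏ i ∈ s, y i} := Ideal.subset_span (by simp)
    have hy : y a * ∏ i ∈ s, y i ∈ Ideal.span {x, y a * ∏ i ∈ s, y i} :=
      Ideal.subset_span (by simp)
    rintro w (rfl | rfl | rfl | rfl)
    · exact Ideal.mul_mem_left _ _ hx
    · exact Ideal.mul_mem_right _ _ hx
    · exact Ideal.mul_mem_left _ _ hx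
    · exact hy

/-- the product over the orbit of a point is `(X - a)`. -/
lemma aux_point {K : Type*} [Field K] (d : ℕ) (hd : 2 ≤ d) (f : K[X]) (hsqf : Squarefree f)
    [IsDomain (CurveRing K d f)] (ζ : K) (hζ : IsPrimitiveRoot ζ d) (a c : K)
    (hac : c ^ d = f.eval a) :
    ∏ i ∈ Finset.range d, Ideal.span {(AdjoinRoot.of _ (X - C a) : CurveRing K d f),
      (AdjoinRoot.of _ (C ζ)) ^ i * AdjoinRoot.root _ - AdjoinRoot.of _ (C c)} =
    Ideal.span {(AdjoinRoot.of _ (X - C a) : CurveRing K d f)} := by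
  set o : K[X] →+* CurveRing K d f := AdjoinRoot.of _ with ho
  set y : CurveRing K d f := AdjoinRoot.root _ with hy
  have hyd : y ^ d = o f := by
    have h := AdjoinRoot.eval₂_root ((X : K[X][X]) ^ d - C f)
    simp only [eval₂_sub, eval₂_pow, eval₂_X, eval₂_C] at h
    exact sub_eq_zero.mp h
  have hinj : Function.Injective (o.comp C) := (o.comp C).injective
  have hz : IsPrimitiveRoot (o (C ζ)) d := hζ.map_of_injective hinj
  obtain ⟨g, hg⟩ := X_sub_C_dvd_sub_C_eval (p := f) (a := a)
  have hprod : ∏ i ∈ Finset.range d, (o (C ζ) ^ i * y - o (C c)) ∈ Ideal.span {o (X - C a)} := by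
    have h1 : ∀ i ∈ Finset.range d, o (C ζ) ^ i * y - o (C c) =
        (-1) * (o (C c) - o (C ζ) ^ i * y) := fun i _ => by ring
    rw [Finset.prod_congr rfl h1, Finset.prod_mul_distrib, aux_prod_root (by omega) hz]
    refine Ideal.mul_mem_left _ _ ?_
    rw [hyd, ← map_pow, ← map_pow, hac, ← map_sub]
    rw [Ideal.mem_span_singleton]
    refine map_dvd o ?_
    rw [← neg_sub f, hg]
    exact (dvd_mul_right _ _).neg_right
  apply le_antisymm
  · refine (aux_prod_le _ _ _).trans ?_
    rw [Ideal.span_le]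
    rintro w (rfl | rfl)
    · exact Ideal.subset_span rfl
    · exact hprod
  · rw [Ideal.span_singleton_le_iff_mem]
    by_cases hc : c = 0
    · subst hc
      have hfa : f.eval a = 0 := by rw [← hac, zero_pow (by omega)]
      rw [hfa, map_zero, sub_zero] at hg
      set J := ∏ i ∈ Finset.range d, Ideal.span {o (X - C a), o (C ζ) ^ i * y - o (C 0)} with hJ
      have m1 : o (X - C a) ^ d ∈ J := by
        have := Ideal.prod_mem_prod (s := Finset.range d)
          (I := fun i => Ideal.span {o (X - C a), o (C ζ) ^ i * y - o (C 0)})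
          (x := fun _ => o (X - C a)) (fun i _ => Ideal.subset_span (by simp))
        rw [Finset.prod_const, Finset.card_range] at this
        exact this
      have m2 : o f ∈ J := by
        have := Ideal.prod_mem_prod (s := Finset.range d)
          (I := fun i => Ideal.span {o (X - C a), o (C ζ) ^ i * y - o (C 0)})
          (x := fun i => o (C ζ) ^ i * y - o (C 0)) (fun i _ => Ideal.subset_span (by simp))
        have h2 := aux_prod_root (by omega) hz 0 y
        have h1 : ∀ i ∈ Finset.range d, o (C ζ) ^ i * y - o (C 0) =
          (-1) * (0 - o (C ζ) ^ i * y) := fun i _ => by simp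
        rw [Finset.prod_congr rfl h1, Finset.prod_mul_distrib, h2, zero_pow (by omega), hyd] at this
        simp only [Finset.prod_const, Finset.card_range, zero_sub] at this
        have h3 := Ideal.mul_mem_left J (-(-1) ^ d) this
        have h4 : (-(-1) ^ d) * ((-1) ^ d * -o f) = o f := by
          have : ((-1 : CurveRing K d f) ^ d) * (-1) ^ d = 1 := by
            rw [← mul_pow]; simp
          linear_combination (o f) * this
        rwa [h4] at h3
      have hga : g.eval a ≠ 0 := by
        intro h
        obtain ⟨k, rfl⟩ := dvd_iff_isRoot.mpr h
        have := hsqf (X - C a) ⟨k, by rw [hg]; ring⟩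
        exact not_isUnit_X_sub_C a this
      have hcop : IsCoprime ((X - C a) ^ (d - 1)) g := by
        apply IsCoprime.pow_left
        rw [(irreducible_X_sub_C a).coprime_iff_not_dvd]
        exact fun h => hga (dvd_iff_isRoot.mp h)
      obtain ⟨u, v, huv⟩ := hcop
      have : o (X - C a) = o u * o (X - C a) ^ d + o v * o f := by
        rw [← map_pow, ← map_mul, ← map_mul, ← map_add]
        congr 1
        rw [hg]
        obtain ⟨e, rfl⟩ : ∃ e, d = e + 1 := ⟨d - 1, by omega⟩
        simp only [Nat.add_sub_cancel] at huv
        linear_combination (-(X - C a)) * huv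
      rw [this]
      exact J.add_mem (J.mul_mem_left _ m1) (J.mul_mem_left _ m2)
    · rw [Ideal.prod_eq_iInf_of_pairwise_isCoprime]
      · simp only [Ideal.mem_iInf]
        exact fun i _ => Ideal.subset_span (by simp)
      · intro i hi j hj hij
        show IsCoprime (Ideal.span _) (Ideal.span _)
        rw [Ideal.isCoprime_iff_sup_eq, Ideal.eq_top_iff_one]
        have hne : ζ ^ i - ζ ^ j ≠ 0 := fun h =>
          hij (hζ.pow_inj (by simpa using hi) (by simpa using hj) (sub_eq_zero.mp h))
        have hu : o (C ((ζ ^ i - ζ ^ j) * c)) * o (C ((ζ ^ i - ζ ^ j) * c)⁻¹) = 1 := by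
          rw [← map_mul, ← map_mul, mul_inv_cancel₀ (mul_ne_zero hne hc), map_one, map_one]
        rw [← hu]
        refine Ideal.mul_mem_right _ _ ?_
        have h5 : o (C ((ζ ^ i - ζ ^ j) * c)) =
          o (C ζ) ^ j * (o (C ζ) ^ i * y - o (C c)) * (-1) * (-1) +
            (-1) * (o (C ζ) ^ i * (o (C ζ) ^ j * y - o (C c))) := by
          simp only [map_mul, map_sub, map_pow]; ring
        rw [h5]
        refine Ideal.add_mem _ ?_ ?_
        · refine Ideal.mul_mem_right _ _ (Ideal.mul_mem_right _ _ (Ideal.mul_mem_left _ _ ?_))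
          exact Ideal.mem_sup_left (Ideal.subset_span (by simp))
        · refine Ideal.mul_mem_left _ _ (Ideal.mul_mem_left _ _ ?_)
          exact Ideal.mem_sup_right (Ideal.subset_span (by simp))

lemma aux_max {K : Type*} [Field K] [IsAlgClosed K] (d : ℕ) (f : K[X])
    (P : Ideal (CurveRing K d f)) [hP : P.IsMaximal] :
    ∃ a c : K, c ^ d = f.eval a ∧ P = Ideal.span {(AdjoinRoot.of _ (X - C a) : CurveRing K d f),
      AdjoinRoot.root _ - AdjoinRoot.of _ (C c)} := by
  let : Field (CurveRing K d f ⧸ P) := Ideal.Quotient.field P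
  have : Module.Finite K (CurveRing K d f ⧸ P) :=
    finite_of_finite_type_of_isJacobsonRing K (CurveRing K d f ⧸ P)
  have hb := (IsAlgClosed.algebraMap_bijective_of_isIntegral (k := K)
    (K := CurveRing K d f ⧸ P)).2
  set o : K[X] →+* CurveRing K d f := AdjoinRoot.of _ with ho
  set y : CurveRing K d f := AdjoinRoot.root _ with hy
  have hyd : y ^ d = o f := by
    have h := AdjoinRoot.eval₂_root ((X : K[X][X]) ^ d - C f)
    simp only [eval₂_sub, eval₂_pow, eval₂_X, eval₂_C] at h
    exact sub_eq_zero.mp h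
  have key : ∀ w : CurveRing K d f, ∃ k : K, w - o (C k) ∈ P := by
    intro w
    obtain ⟨k, hk⟩ := hb (Ideal.Quotient.mk P w)
    refine ⟨k, ?_⟩
    rw [← Ideal.Quotient.eq, ← hk]
    rfl
  have hconst : ∀ k : K, o (C k) ∈ P → k = 0 := by
    intro k hk
    by_contra h
    apply hP.ne_top
    rw [Ideal.eq_top_iff_one]
    have := P.mul_mem_left (o (C k⁻¹)) hk
    rwa [← map_mul, ← map_mul, inv_mul_cancel₀ h, map_one, map_one] at this
  obtain ⟨a, ha⟩ := key (o X)
  obtain ⟨c, hc⟩ := key y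
  rw [← map_sub] at ha
  have hle : Ideal.span {o (X - C a), y - o (C c)} ≤ P := by
    rw [Ideal.span_le]
    rintro w (rfl | rfl)
    · exact ha
    · exact hc
  refine ⟨a, c, ?_, le_antisymm ?_ hle⟩
  · rw [← sub_eq_zero]
    apply hconst
    have h1 : o (f - C (f.eval a)) ∈ P :=
      Ideal.mem_of_dvd P (map_dvd o X_sub_C_dvd_sub_C_eval) ha
    have h2 : y ^ d - o (C c) ^ d ∈ P := Ideal.mem_of_dvd P (sub_dvd_pow_sub_pow _ _ _) hc
    have : o (C (c ^ d - f.eval a)) = o (f - C (f.eval a)) - (y ^ d - o (C c) ^ d) := by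
      rw [hyd]; simp only [map_sub, map_pow]; ring
    rw [this]
    exact P.sub_mem h1 h2
  · intro w hw
    set Q := Ideal.span {o (X - C a), y - o (C c)} with hQ
    obtain ⟨q, rfl⟩ := AdjoinRoot.mk_surjective w
    have h1 : AdjoinRoot.mk _ (q - C (q.eval (C c))) ∈ Q := by
      refine Ideal.mem_of_dvd Q (map_dvd (AdjoinRoot.mk _) X_sub_C_dvd_sub_C_eval) ?_
      rw [map_sub, AdjoinRoot.mk_X, AdjoinRoot.mk_C]
      exact Ideal.subset_span (by simp [hy, ho])
    set r := q.eval (C c) with hr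
    have h2 : o (r - C (r.eval a)) ∈ Q :=
      Ideal.mem_of_dvd Q (map_dvd o X_sub_C_dvd_sub_C_eval) (Ideal.subset_span (by simp))
    have h3 : AdjoinRoot.mk _ q = AdjoinRoot.mk _ (q - C r) + o (r - C (r.eval a))
        + o (C (r.eval a)) := by
      rw [map_sub, map_sub, AdjoinRoot.mk_C]; ring
    have h4 : o (C (r.eval a)) ∈ P := by
      have h5 := P.sub_mem hw (hle (Q.add_mem h1 h2))
      rwa [h3, add_sub_cancel_left] at h5
    have h6 : o (C (r.eval a)) = 0 := by rw [hconst _ h4, map_zero, map_zero]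
    rw [h3, h6, add_zero]
    exact Q.add_mem h1 h2

theorem stmt_6 {K : Type*} [Field K] [IsAlgClosed K] (d n : ℕ)
    (hd : 2 ≤ d) (hdn : d < n) (hgcd : Nat.gcd n d = 1)
    (hchar : ¬ (ringChar K ∣ d))
    (f : K[X]) (hmonic : f.Monic) (hdeg : f.natDegree = n) (hsqf : Squarefree f)
    (hDed : IsDedekindDomain (CurveRing K d f))
    (ζ : K) (hζ : IsPrimitiveRoot ζ d)
    (σ : CurveRing K d f ≃+* CurveRing K d f)
    (hσK : ∀ k : K, σ (AdjoinRoot.of _ (C k)) = AdjoinRoot.of _ (C k))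
    (hσX : σ (AdjoinRoot.of _ X) = AdjoinRoot.of _ X)
    (hσY : σ (AdjoinRoot.root _) =
      AdjoinRoot.of _ (C ζ) * AdjoinRoot.root _) :
    ∀ I : Ideal (CurveRing K d f), I ≠ ⊥ →
      (∏ i ∈ Finset.range d, Ideal.map (σ ^ i) I).IsPrincipal := by
  intro I _
  have : IsDomain (CurveRing K d f) := hDed.toIsDomain
  set o : K[X] →+* CurveRing K d f := AdjoinRoot.of _ with ho
  set y : CurveRing K d f := AdjoinRoot.root _ with hy
  have hofix : ∀ p : K[X], σ (o p) = o p := by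
    intro p
    have h : ((σ : CurveRing K d f →+* CurveRing K d f).comp o) = o := by
      apply Polynomial.ringHom_ext
      · intro k; exact hσK k
      · exact hσX
    exact congrArg (fun φ : K[X] →+* CurveRing K d f => φ p) h
  have hofix' : ∀ (i : ℕ) (p : K[X]), (σ ^ i) (o p) = o p := by
    intro i p
    induction i with
    | zero => rfl
    | succ i ih => rw [pow_succ, RingAut.mul_apply, hofix, ih]
  have hyi : ∀ i : ℕ, (σ ^ i) y = o (C ζ) ^ i * y := by
    intro i
    induction i with
    | zero => simp
    | succ i ih => rw [pow_succ, RingAut.mul_apply, hσY, map_mul, hofix', ih]; ring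
  induction I using UniqueFactorizationMonoid.induction_on_prime with
  | h₁ =>
    rw [Finset.prod_eq_zero (i := 0) (by simp [show 0 < d by omega]) (by
      rw [Submodule.zero_eq_bot, Ideal.map_bot])]
    exact bot_isPrincipal
  | h₂ J hJ =>
    rw [Ideal.isUnit_iff] at hJ
    subst hJ
    simp only [Ideal.map_top]
    rw [← Ideal.one_eq_top, Finset.prod_const_one, Ideal.one_eq_top]
    exact top_isPrincipal
  | h₃ J P hJ hP ih =>
    simp only [Ideal.map_mul, Finset.prod_mul_distrib]
    have hPm : P.IsMaximal := (Ideal.isPrime_of_prime hP).isMaximal hP.ne_zero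
    obtain ⟨a, c, hac, hPe⟩ := aux_max d f P
    have hPp : ∏ i ∈ Finset.range d, Ideal.map (σ ^ i) P = Ideal.span {o (X - C a)} := by
      rw [← aux_point d hd f hsqf ζ hζ a c hac]
      refine Finset.prod_congr rfl fun i _ => ?_
      have e1 := hofix' i (X - C a)
      have e2 : (σ ^ i) (y - o (C c)) = o (C ζ) ^ i * y - o (C c) := by
        rw [map_sub, hyi, hofix']
      rw [hPe, Ideal.map_span, Set.image_pair]
      exact congrArg₂ (fun u v => Ideal.span {u, v}) e1 e2
    obtain ⟨⟨b, hb⟩⟩ := ih (by rwa [← Submodule.zero_eq_bot])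
    rw [hPp, hb]
    exact ⟨⟨_, Ideal.span_singleton_mul_span_singleton _ _⟩⟩
end

section
/- Assume additionally that one of the following holds: (i) the characteristic of K is a prime p and n is a power of p; or (ii) K has characteristic 0 and d does not divide n − 1. Then the set of K-points (a,c) of the affine curve y^d = f(x) that are torsion points of order exactly n (i.e., n is the least positive integer with m_{(a,c)}^n principal) has cardinality either 0 or d. -/
open Polynomial

namespace CurveAux
variable {K : Type*} [Field K] {d n : ℕ} {f : K[X]}

noncomputable abbrev xx (d : ℕ) (f : K[X]) : CurveRing K d f := AdjoinRoot.of _ X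
noncomputable abbrev yy (d : ℕ) (f : K[X]) : CurveRing K d f := AdjoinRoot.root _

lemma algMap_eq (t : K) : algebraMap K (CurveRing K d f) t = AdjoinRoot.of _ (C t) := by
  rfl

lemma yy_pow : (yy d f) ^ d = AdjoinRoot.of _ f := by
  have h := AdjoinRoot.eval₂_root ((X : K[X][X]) ^ d - C f)
  rw [eval₂_sub, eval₂_X_pow, eval₂_C] at h
  exact sub_eq_zero.mp h

lemma pmonic (hd : 2 ≤ d) : ((X : K[X][X]) ^ d - C f).Monic :=
  monic_X_pow_sub_C f (by omega)

/-- the conjugation `y ↦ ζ y`. -/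
noncomputable def sig (d : ℕ) (f : K[X]) (z : K) (hz : z ^ d = 1) :
    CurveRing K d f →ₐ[K] CurveRing K d f :=
  AdjoinRoot.liftAlgHom _ (IsScalarTower.toAlgHom K K[X] (CurveRing K d f))
    (algebraMap K _ z * yy d f) (by
      rw [eval₂_sub, eval₂_X_pow, eval₂_C, mul_pow, ← map_pow, hz, map_one, one_mul, yy_pow]
      exact sub_self _)

lemma sig_of (z : K) (hz : z ^ d = 1) (g : K[X]) :
    sig d f z hz (AdjoinRoot.of _ g) = AdjoinRoot.of _ g := by
  simp [sig]

lemma sig_yy (z : K) (hz : z ^ d = 1) :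
    sig d f z hz (yy d f) = algebraMap K _ z * yy d f := by
  simp [sig]

/-- weight filtration -/
noncomputable def Fil (d n : ℕ) (f : K[X]) (k : ℕ) : Submodule K (CurveRing K d f) :=
  Submodule.span K {w | ∃ e i, d * e + n * i < k ∧ w = xx d f ^ e * yy d f ^ i}

lemma mono_mem {e i k : ℕ} (h : d * e + n * i < k) : xx d f ^ e * yy d f ^ i ∈ Fil d n f k :=
  Submodule.subset_span ⟨e, i, h, rfl⟩

lemma Fil_mono {k l : ℕ} (h : k ≤ l) : Fil d n f k ≤ Fil d n f l :=
  Submodule.span_mono (by rintro w ⟨e, i, h1, rfl⟩; exact ⟨e, i, by omega, rfl⟩)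

lemma Fil_mul {k l : ℕ} {u v : CurveRing K d f} (hu : u ∈ Fil d n f k) (hv : v ∈ Fil d n f l) :
    u * v ∈ Fil d n f (k + l - 1) := by
  have : Fil d n f k * Fil d n f l ≤ Fil d n f (k + l - 1) := by
    unfold Fil
    rw [Submodule.span_mul_span]
    apply Submodule.span_mono
    rintro _ ⟨_, ⟨e, i, h1, rfl⟩, _, ⟨e', i', h2, rfl⟩, rfl⟩
    refine ⟨e + e', i + i', ?_, ?_⟩
    · rw [mul_add, mul_add]; omega
    · simp only [pow_add]; ring
  exact this (Submodule.mul_mem_mul hu hv)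

lemma sig_Fil (z : K) (hz : z ^ d = 1) {k : ℕ} {u : CurveRing K d f} (hu : u ∈ Fil d n f k) :
    sig d f z hz u ∈ Fil d n f k := by
  have : Fil d n f k ≤ (Fil d n f k).comap (sig d f z hz).toLinearMap := by
    conv_lhs => unfold Fil
    rw [Submodule.span_le]
    rintro _ ⟨e, i, h1, rfl⟩
    rw [SetLike.mem_coe, Submodule.mem_comap, AlgHom.toLinearMap_apply, map_mul, map_pow, map_pow, sig_of, sig_yy, mul_pow, ← map_pow (algebraMap K _) z i, mul_left_comm,
      ← Algebra.smul_def]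
    exact Submodule.smul_mem _ _ (mono_mem h1)
  exact this hu

/-- `h` has leading weight `k` -/
def Lead (d n : ℕ) (f : K[X]) (k : ℕ) (h : CurveRing K d f) : Prop :=
  ∃ t : K, t ≠ 0 ∧ ∃ e i, d * e + n * i = k ∧ h - t • (xx d f ^ e * yy d f ^ i) ∈ Fil d n f k

lemma Lead_mul {k l : ℕ} {u v : CurveRing K d f} (hu : Lead d n f k u) (hv : Lead d n f l v) :
    Lead d n f (k + l) (u * v) := by
  obtain ⟨t, ht, e, i, hk, hu⟩ := hu
  obtain ⟨s, hs, e', i', hl, hv⟩ := hv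
  refine ⟨t * s, mul_ne_zero ht hs, e + e', i + i', by rw [mul_add, mul_add]; omega, ?_⟩
  have m1 : t • (xx d f ^ e * yy d f ^ i) ∈ Fil d n f (k + 1) :=
    Submodule.smul_mem _ _ (mono_mem (by omega))
  have m2 : s • (xx d f ^ e' * yy d f ^ i') ∈ Fil d n f (l + 1) :=
    Submodule.smul_mem _ _ (mono_mem (by omega))
  have e1 := Fil_mul hu hv
  have e2 := Fil_mul m1 hv
  have e3 := Fil_mul hu m2
  have := Submodule.add_mem _ (Submodule.add_mem _ (Fil_mono (by omega : _ ≤ k + l) e1)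
    (Fil_mono (by omega : _ ≤ k + l) e2)) (Fil_mono (by omega : _ ≤ k + l) e3)
  convert this using 1
  simp only [Algebra.smul_def, map_mul, pow_add]
  ring

lemma Lead_one : Lead d n f 0 (1 : CurveRing K d f) :=
  ⟨1, one_ne_zero, 0, 0, by simp, by simp⟩

lemma Lead_prod {ι : Type*} (s : Finset ι) (k : ℕ) (g : ι → CurveRing K d f)
    (h : ∀ i ∈ s, Lead d n f k (g i)) : Lead d n f (s.card * k) (∏ i ∈ s, g i) := by
  classical
  induction s using Finset.induction_on with
  | empty => simpa using Lead_one
  | insert a s ha ih =>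
    rw [Finset.prod_insert ha, Finset.card_insert_of_notMem ha, add_mul, one_mul, add_comm]
    exact Lead_mul (h a (by simp)) (ih fun i hi => h i (by simp [hi]))

lemma Lead_sig (z : K) (hz : z ^ d = 1) (hd : 2 ≤ d) {k : ℕ} {u : CurveRing K d f}
    (hu : Lead d n f k u) : Lead d n f k (sig d f z hz u) := by
  obtain ⟨t, ht, e, i, hk, hu⟩ := hu
  have hz0 : z ≠ 0 := by rintro rfl; rw [zero_pow (by omega)] at hz; exact zero_ne_one hz
  refine ⟨t * z ^ i, mul_ne_zero ht (pow_ne_zero _ hz0), e, i, hk, ?_⟩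
  convert sig_Fil z hz hu using 1
  rw [map_sub, map_smul, map_mul, map_pow, map_pow, sig_of, sig_yy]
  simp only [Algebra.smul_def, map_mul, map_pow]
  ring

lemma Lead_sub (hd : 2 ≤ d) (a : K) : Lead d n f d (AdjoinRoot.of _ (X - C a)) := by
  refine ⟨1, one_ne_zero, 1, 0, by simp, ?_⟩
  have : (-a) • (xx d f ^ 0 * yy d f ^ 0) ∈ Fil d n f d :=
    Submodule.smul_mem _ _ (mono_mem (by omega))
  convert this using 1
  simp [Algebra.smul_def, algMap_eq]

/-- reduced coefficients -/
lemma coeff_mono (hd : 2 ≤ d) (e i j : ℕ) :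
    (AdjoinRoot.modByMonicHom (pmonic (f := f) hd) (xx d f ^ e * yy d f ^ i)).coeff j
      = if j = i % d then X ^ e * f ^ (i / d) else 0 := by
  have h1 : xx d f ^ e * yy d f ^ i
      = AdjoinRoot.mk _ (C (X ^ e * f ^ (i / d)) * X ^ (i % d)) := by
    conv_lhs => rw [← Nat.div_add_mod i d, pow_add, pow_mul, yy_pow]
    rw [map_mul, map_pow, AdjoinRoot.mk_X, AdjoinRoot.mk_C, map_mul, map_pow, map_pow]
    ring
  rw [h1, AdjoinRoot.modByMonicHom_mk, (modByMonic_eq_self_iff (pmonic hd)).mpr, coeff_C_mul_X_pow]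
  rw [degree_X_pow_sub_C (by omega)]
  refine lt_of_le_of_lt (degree_C_mul_X_pow_le _ _) ?_
  exact_mod_cast Nat.mod_lt _ (by omega)

lemma Fil_coeff (hd : 2 ≤ d) (hmonic : f.Monic) (hdeg : f.natDegree = n) {k : ℕ}
    {u : CurveRing K d f} (hu : u ∈ Fil d n f k) (j e : ℕ) (hk : k ≤ d * e + n * j) :
    ((AdjoinRoot.modByMonicHom (pmonic (f := f) hd) u).coeff j).coeff e = 0 := by
  unfold Fil at hu
  induction hu using Submodule.span_induction with
  | mem w hw =>
    obtain ⟨e', i, h, rfl⟩ := hw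
    rw [coeff_mono hd]
    split_ifs with hj
    · apply coeff_eq_zero_of_natDegree_lt
      rw [Monic.natDegree_mul (monic_X_pow _) (hmonic.pow _), natDegree_X_pow,
        hmonic.natDegree_pow, hdeg]
      have := Nat.div_add_mod i d
      subst hj
      by_contra hlt
      push Not at hlt
      have : d * e ≤ d * (e' + i / d * n) := Nat.mul_le_mul_left _ hlt
      have h3 : n * i = n * (d * (i / d)) + n * (i % d) := by rw [← mul_add, Nat.div_add_mod]
      have h4 : n * (d * (i / d)) = d * (i / d * n) := by ring
      rw [mul_add] at this
      omega
    · simp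
  | zero => simp
  | add x y _ _ hx hy => simp [hx, hy]
  | smul t x _ hx =>
    have : t • x = (C t : K[X]) • x := by
      rw [Algebra.smul_def, Algebra.smul_def]; rfl
    rw [this, map_smul, coeff_smul, smul_eq_mul, coeff_C_mul, hx, mul_zero]

lemma Lead_unique_aux (hd : 2 ≤ d) (hmonic : f.Monic) (hdeg : f.natDegree = n) {k l : ℕ}
    {u : CurveRing K d f} (hk : Lead d n f k u) (hl : Lead d n f l u) : ¬ k < l := by
  intro hkl
  obtain ⟨t, ht, e, i, hk, hu⟩ := hk
  obtain ⟨s, hs, e', i', hl, hv⟩ := hl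
  have m1 : t • (xx d f ^ e * yy d f ^ i) ∈ Fil d n f l :=
    Submodule.smul_mem _ _ (mono_mem (by omega))
  have m2 := Submodule.sub_mem _ (Submodule.add_mem _ (Fil_mono hkl.le hu) m1) hv
  rw [sub_add_cancel, sub_sub_cancel] at m2
  have m3 := (Submodule.smul_mem_iff _ hs).mp m2
  have := Fil_coeff hd hmonic hdeg m3 (i' % d) (e' + i' / d * n) (by
    have h3 : n * i' = n * (d * (i' / d)) + n * (i' % d) := by rw [← mul_add, Nat.div_add_mod]
    have h4 : n * (d * (i' / d)) = d * (i' / d * n) := by ring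
    rw [mul_add]; omega)
  rw [coeff_mono hd, if_pos rfl] at this
  have hm : (X ^ e' * f ^ (i' / d)).Monic := (monic_X_pow _).mul (hmonic.pow _)
  have hn : (X ^ e' * f ^ (i' / d)).natDegree = e' + i' / d * n := by
    rw [Monic.natDegree_mul (monic_X_pow _) (hmonic.pow _), natDegree_X_pow,
        hmonic.natDegree_pow, hdeg]
  rw [← hn, hm.coeff_natDegree] at this
  exact one_ne_zero this

lemma Lead_unique (hd : 2 ≤ d) (hmonic : f.Monic) (hdeg : f.natDegree = n) {k l : ℕ}
    {u : CurveRing K d f} (hk : Lead d n f k u) (hl : Lead d n f l u) : k = l := by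
  have := Lead_unique_aux hd hmonic hdeg hk hl
  have := Lead_unique_aux hd hmonic hdeg hl hk
  omega

lemma Lead_exists (hd : 2 ≤ d) (hgcd : Nat.gcd n d = 1) {u : CurveRing K d f} (hu : u ≠ 0) :
    ∃ k, Lead d n f k u := by
  classical
  set p := AdjoinRoot.modByMonicHom (pmonic (f := f) hd) u with hp
  have hup : AdjoinRoot.mk _ p = u := AdjoinRoot.mk_leftInverse (pmonic hd) u
  have hpd : ∀ j, p.coeff j ≠ 0 → j < d := by
    intro j hj
    obtain ⟨q, hq⟩ := AdjoinRoot.mk_surjective u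
    by_contra hlt
    apply hj
    apply coeff_eq_zero_of_degree_lt
    rw [hp, ← hq, AdjoinRoot.modByMonicHom_mk]
    refine lt_of_lt_of_le (degree_modByMonic_lt _ (pmonic hd)) ?_
    rw [degree_X_pow_sub_C (by omega)]
    exact_mod_cast not_lt.mp hlt
  let S : Finset ((_ : ℕ) × ℕ) := p.support.sigma fun j => (p.coeff j).support
  have hsum : u = ∑ w ∈ S, ((p.coeff w.1).coeff w.2) • (xx d f ^ w.2 * yy d f ^ w.1) := by
    rw [Finset.sum_sigma, ← hup]
    conv_lhs => rw [p.as_sum_support_C_mul_X_pow, map_sum]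
    refine Finset.sum_congr rfl fun j _ => ?_
    rw [map_mul, map_pow, AdjoinRoot.mk_X, AdjoinRoot.mk_C]
    conv_lhs => rw [(p.coeff j).as_sum_support_C_mul_X_pow, map_sum, Finset.sum_mul]
    refine Finset.sum_congr rfl fun e _ => ?_
    rw [map_mul, map_pow, Algebra.smul_def, algMap_eq]
    ring
  have hS : S.Nonempty := by
    rw [Finset.nonempty_iff_ne_empty]
    intro h
    rw [h] at hsum
    exact hu (by simpa using hsum)
  obtain ⟨w, hw, hmax⟩ := Finset.exists_max_image S (fun w => d * w.2 + n * w.1) hS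
  have hmem : ∀ w ∈ S, (p.coeff w.1).coeff w.2 ≠ 0 ∧ w.1 < d := by
    intro w hw
    rw [Finset.mem_sigma, mem_support_iff, mem_support_iff] at hw
    exact ⟨hw.2, hpd _ hw.1⟩
  refine ⟨d * w.2 + n * w.1, _, (hmem w hw).1, w.2, w.1, rfl, ?_⟩
  conv in u - _ => rw [hsum, ← Finset.add_sum_erase S _ hw, add_sub_cancel_left]
  refine Submodule.sum_mem _ fun v hv => Submodule.smul_mem _ _ (mono_mem ?_)
  rw [Finset.mem_erase] at hv
  refine lt_of_le_of_ne (hmax v hv.2) fun heq => hv.1 ?_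
  have h1 := (hmem w hw).2
  have h2 := (hmem v hv.2).2
  have hco : Nat.Coprime d n := by rw [Nat.coprime_comm]; exact hgcd
  have h3 : v.1 ≡ w.1 [MOD d] := by
    have : n * v.1 ≡ n * w.1 [MOD d] := by
      have : d * v.2 + n * v.1 ≡ d * w.2 + n * w.1 [MOD d] := by rw [heq]
      simpa [Nat.ModEq] using this
    exact Nat.ModEq.cancel_left_of_coprime hco this
  have h4 : v.1 = w.1 := Nat.ModEq.eq_of_lt_of_lt h3 h2 h1
  have h5 : v.2 = w.2 := by
    rw [h4] at heq
    exact Nat.eq_of_mul_eq_mul_left (by omega : 0 < d) (by omega)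
  exact Sigma.ext h4 (heq_of_eq h5)

lemma prod_sub {A : Type*} [CommRing A] [IsDomain A] [Algebra K A] (hd : 2 ≤ d) {ζ : K}
    (hζ : IsPrimitiveRoot ζ d) (v y : A) :
    ∏ z ∈ nthRootsFinset d (1 : K), (v - algebraMap K A z * y) = v ^ d - y ^ d := by
  classical
  have hinj := FaithfulSMul.algebraMap_injective K A
  have hζ' : IsPrimitiveRoot (algebraMap K A ζ) d := hζ.map_of_injective hinj
  rw [hζ'.pow_sub_pow_eq_prod_sub_mul v y (by omega)]
  have : nthRootsFinset d (1 : A) = (nthRootsFinset d (1 : K)).image (algebraMap K A) := by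
    symm
    apply Finset.eq_of_subset_of_card_le
    · intro w hw
      obtain ⟨z, hz, rfl⟩ := Finset.mem_image.mp hw
      exact map_mem_nthRootsFinset_one hz _
    · rw [Finset.card_image_of_injective _ hinj, hζ'.card_nthRootsFinset, hζ.card_nthRootsFinset]
  rw [this, Finset.prod_image (fun a _ b _ h => hinj h)]

lemma prod_sub' {A : Type*} [CommRing A] [IsDomain A] [Algebra K A] (hd : 2 ≤ d) {ζ : K}
    (hζ : IsPrimitiveRoot ζ d) (v y : A) :
    ∏ z ∈ nthRootsFinset d (1 : K), (algebraMap K A z * y - v) = (-1) ^ d * (v ^ d - y ^ d) := by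
  rw [← prod_sub hd hζ, ← hζ.card_nthRootsFinset, ← Finset.prod_const, hζ.card_nthRootsFinset,
    ← Finset.prod_mul_distrib]
  exact Finset.prod_congr rfl fun z _ => by ring

noncomputable def jj (d : ℕ) (f : K[X]) (a c z : K) : Ideal (CurveRing K d f) :=
  Ideal.span {AdjoinRoot.of _ (X - C a), algebraMap K _ z * yy d f - AdjoinRoot.of _ (C c)}

lemma map_pt (a c z : K) (hz : z ^ d = 1) :
    (ptIdeal d f a c).map (sig d f z hz) = jj d f a c z := by
  rw [ptIdeal, Ideal.map_span, jj]
  congr 1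
  rw [Set.image_pair, map_sub (sig d f z hz) (AdjoinRoot.root _), sig_of, sig_of, sig_yy]

lemma prod_span_pair_le {A ι : Type*} [CommRing A] (s : Finset ι) (x : A) (t : ι → A) :
    ∏ i ∈ s, Ideal.span {x, t i} ≤ Ideal.span {x, ∏ i ∈ s, t i} := by
  classical
  induction s using Finset.induction_on with
  | empty =>
    simp only [Finset.prod_empty, Ideal.one_eq_top]
    rw [(Ideal.eq_top_iff_one _).mpr (Ideal.subset_span (by simp) : (1 : A) ∈ Ideal.span {x, 1})]
  | insert b s hb ih =>
    rw [Finset.prod_insert hb, Finset.prod_insert hb]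
    refine (Ideal.mul_mono_right ih).trans ?_
    rw [Ideal.span_pair_mul_span_pair, Ideal.span_le]
    have hx : x ∈ Ideal.span {x, t b * ∏ i ∈ s, t i} := Ideal.subset_span (by simp)
    have hy : t b * ∏ i ∈ s, t i ∈ Ideal.span {x, t b * ∏ i ∈ s, t i} :=
      Ideal.subset_span (by simp)
    rintro w (rfl | rfl | rfl | rfl)
    · exact Ideal.mul_mem_left _ _ hx
    · exact Ideal.mul_mem_right _ _ hx
    · exact Ideal.mul_mem_left _ _ hx
    · exact hy

lemma prod_jj [IsDomain (CurveRing K d f)] (hd : 2 ≤ d) {ζ : K} (hζ : IsPrimitiveRoot ζ d)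
    (hsqf : Squarefree f) {a c : K} (hc : c ^ d = f.eval a) :
    ∏ z ∈ nthRootsFinset d (1 : K), jj d f a c z = Ideal.span {AdjoinRoot.of _ (X - C a)} := by
  apply le_antisymm
  · refine (prod_span_pair_le _ _ _).trans ?_
    rw [prod_sub' hd hζ, yy_pow, ← map_pow, ← map_sub, Ideal.span_le]
    have : X - C a ∣ (C c) ^ d - f := by
      rw [dvd_iff_isRoot]; simp [hc]
    obtain ⟨q, hq⟩ := this
    rintro w (rfl | rfl)
    · exact Ideal.subset_span (by simp)
    · rw [hq, map_mul]
      exact Ideal.mul_mem_left _ _ (Ideal.mul_mem_right _ _ (Ideal.subset_span (by simp)))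
  · rw [Ideal.span_singleton_le_iff_mem]
    by_cases hc0 : c = 0
    · subst hc0
      have hr : f.eval a = 0 := by rw [← hc, zero_pow (by omega)]
      obtain ⟨q, hq⟩ := dvd_iff_isRoot.mpr hr
      have hcop : IsCoprime ((X - C a) ^ (d - 1)) q := by
        apply IsCoprime.pow_left
        rw [(irreducible_X_sub_C a).coprime_iff_not_dvd]
        rintro ⟨r, hr⟩
        have := hsqf (X - C a) ⟨r, by rw [hq, hr]; ring⟩
        exact not_isUnit_X_sub_C a this
      obtain ⟨u, v, huv⟩ := hcop
      have m1 : AdjoinRoot.of _ ((X - C a) ^ d) ∈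
          ∏ z ∈ nthRootsFinset d (1 : K), jj d f a 0 z := by
        have hpc : ∏ z ∈ nthRootsFinset d (1 : K), AdjoinRoot.of ((X : K[X][X]) ^ d - C f) (X - C a)
            = AdjoinRoot.of ((X : K[X][X]) ^ d - C f) (X - C a) ^ d := by
          rw [Finset.prod_const, hζ.card_nthRootsFinset]
        rw [map_pow, ← hpc]
        exact Ideal.prod_mem_prod fun z _ => Ideal.subset_span (by simp)
      have m2 : AdjoinRoot.of _ f ∈
          ∏ z ∈ nthRootsFinset d (1 : K), jj d f a 0 z := by
        have : ∏ z ∈ nthRootsFinset d (1 : K), (algebraMap K (CurveRing K d f) z * yy d f - 0) ∈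
            ∏ z ∈ nthRootsFinset d (1 : K), jj d f a 0 z :=
          Ideal.prod_mem_prod fun z _ => Ideal.subset_span (by simp)
        rw [prod_sub' hd hζ, yy_pow, zero_pow (by omega)] at this
        have := Ideal.mul_mem_left _ (-(-1) ^ d) this
        convert this using 1
        have h1 : ((-1 : CurveRing K d f) ^ d) * (-1) ^ d = 1 := by
          rw [← mul_pow]; simp
        linear_combination (-AdjoinRoot.of _ f) * h1
      have : AdjoinRoot.of ((X : K[X][X]) ^ d - C f) (X - C a)
          = AdjoinRoot.of _ u * AdjoinRoot.of _ ((X - C a) ^ d)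
            + AdjoinRoot.of _ v * AdjoinRoot.of _ f := by
        rw [← map_mul, ← map_mul, ← map_add]
        congr 1
        obtain ⟨d', rfl⟩ : ∃ d', d = d' + 1 := ⟨d - 1, by omega⟩
        rw [Nat.add_sub_cancel] at huv
        rw [hq, pow_succ]
        linear_combination (-(X - C a)) * huv
      rw [this]
      exact Ideal.add_mem _ (Ideal.mul_mem_left _ _ m1) (Ideal.mul_mem_left _ _ m2)
    · rw [Ideal.prod_eq_iInf_of_pairwise_isCoprime]
      · simp only [Ideal.mem_iInf]
        intro z _
        exact Ideal.subset_span (by simp)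
      · intro z _ w _ hzw
        show IsCoprime (jj d f a c z) (jj d f a c w)
        rw [Ideal.isCoprime_iff_exists]
        have hne : (z - w) * c ≠ 0 := mul_ne_zero (sub_ne_zero.mpr hzw) hc0
        refine ⟨algebraMap K _ (w * ((z - w) * c)⁻¹) *
            (algebraMap K _ z * yy d f - AdjoinRoot.of _ (C c)),
          Ideal.mul_mem_left _ _ (Ideal.subset_span (by simp)),
          algebraMap K _ (-z * ((z - w) * c)⁻¹) *
            (algebraMap K _ w * yy d f - AdjoinRoot.of _ (C c)),
          Ideal.mul_mem_left _ _ (Ideal.subset_span (by simp)), ?_⟩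
        have h1 : algebraMap K (CurveRing K d f) (((z - w) * c) * ((z - w) * c)⁻¹) = 1 := by
          rw [mul_inv_cancel₀ hne, map_one]
        rw [← algMap_eq]
        simp only [map_mul, map_sub, map_neg] at h1 ⊢
        linear_combination h1

lemma key [IsDomain (CurveRing K d f)] (hd : 2 ≤ d) {ζ : K} (hζ : IsPrimitiveRoot ζ d)
    (hdn : d < n) (hgcd : Nat.gcd n d = 1) (hmonic : f.Monic) (hdeg : f.natDegree = n)
    (hsqf : Squarefree f) {a c : K} (hc : c ^ d = f.eval a)
    (hp : (ptIdeal d f a c ^ n).IsPrincipal) :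
    ∃ v : K[X], d * v.natDegree < n ∧ f = (X - C a) ^ n + v ^ d := by
  classical
  obtain ⟨h, hh⟩ := hp.principal
  change _ = Ideal.span {h} at hh
  set μ := nthRootsFinset d (1 : K) with hμ
  have hμd : ∀ z ∈ μ, z ^ d = 1 := fun z hz => (mem_nthRootsFinset (by omega) _).mp hz
  let sg : K → (CurveRing K d f →ₐ[K] CurveRing K d f) := fun z =>
    if hz : z ^ d = 1 then sig d f z hz else AlgHom.id K _
  have hsg : ∀ z (hz : z ^ d = 1), sg z = sig d f z hz := fun z hz => dif_pos hz
  have e1 : Ideal.span {∏ z ∈ μ, sg z h} = Ideal.span {(AdjoinRoot.of _ (X - C a)) ^ n} := by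
    rw [← Ideal.span_singleton_pow, ← prod_jj hd hζ hsqf hc, ← Ideal.prod_span_singleton,
      ← Finset.prod_pow]
    refine Finset.prod_congr rfl fun z hz => ?_
    rw [← map_pt a c z (hμd z hz), ← Ideal.map_pow, hh, Ideal.map_span, Set.image_singleton,
      hsg z (hμd z hz)]
  rw [Ideal.span_singleton_eq_span_singleton] at e1
  obtain ⟨u, hu⟩ := e1
  have hcard : μ.card = d := hζ.card_nthRootsFinset
  have L0 : Lead d n f (n * d) ((AdjoinRoot.of ((X : K[X][X]) ^ d - C f) (X - C a)) ^ n) := by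
    have := Lead_prod (d := d) (n := n) (f := f) (Finset.range n) d
      (fun _ => AdjoinRoot.of _ (X - C a)) (fun _ _ => Lead_sub hd a)
    simpa using this
  have hn0 : (AdjoinRoot.of ((X : K[X][X]) ^ d - C f) (X - C a)) ^ n ≠ 0 := by
    intro h0
    rw [h0] at L0
    obtain ⟨j, hj⟩ : ∃ j, j ≠ n * d ∧ Lead d n f j (0 : CurveRing K d f) := by
      refine ⟨n * d + d, by omega, ?_⟩
      have := Lead_mul L0 (Lead_sub (n := n) (f := f) hd a)
      rwa [zero_mul] at this
    exact hj.1 (Lead_unique hd hmonic hdeg hj.2 L0)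
  have hh0 : h ≠ 0 := by
    rintro rfl
    apply hn0
    rw [← hu, Finset.prod_eq_zero (i := 1) (by rw [hμ, mem_nthRootsFinset (by omega)]; simp)
      (map_zero _), zero_mul]
  obtain ⟨k, hk⟩ := Lead_exists (n := n) hd hgcd hh0
  have L1 : Lead d n f (d * k) (∏ z ∈ μ, sg z h) := by
    have := Lead_prod (d := d) (n := n) (f := f) μ k (fun z => sg z h) fun z hz => by
      rw [hsg z (hμd z hz)]
      exact Lead_sig z (hμd z hz) hd hk
    rwa [hcard] at this
  obtain ⟨j, hj⟩ := Lead_exists (n := n) hd hgcd u.ne_zero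
  obtain ⟨j', hj'⟩ := Lead_exists (n := n) hd hgcd u⁻¹.ne_zero
  have hj0 : j = 0 := by
    have := Lead_mul hj hj'
    rw [Units.mul_inv] at this
    have := Lead_unique hd hmonic hdeg this Lead_one
    omega
  subst hj0
  have L2 := Lead_mul L1 hj
  rw [hu] at L2
  have hkn : k = n := by
    have := Lead_unique hd hmonic hdeg L2 L0
    rw [add_zero, mul_comm n d] at this
    exact Nat.eq_of_mul_eq_mul_left (by omega : 0 < d) this
  subst hkn
  -- the unit is a constant
  obtain ⟨b, hb, hub⟩ : ∃ b : K, b ≠ 0 ∧ (u : CurveRing K d f) = algebraMap K _ b := by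
    obtain ⟨t, ht, e, i, h1, h2⟩ := hj
    have he : e = 0 := by
      rcases Nat.eq_zero_or_pos e with h | h
      · exact h
      · have : 0 < d * e := Nat.mul_pos (by omega) h
        omega
    have hi : i = 0 := by
      rcases Nat.eq_zero_or_pos i with h | h
      · exact h
      · have : 0 < k * i := Nat.mul_pos (by omega) h
        omega
    have hF : Fil d k f 0 = ⊥ := by
      rw [Fil, Submodule.span_eq_bot]
      rintro w ⟨e, i, h, _⟩
      omega
    rw [hF, Submodule.mem_bot, sub_eq_zero, he, hi] at h2
    exact ⟨t, ht, by rw [h2]; simp [Algebra.smul_def]⟩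
  -- the shape of h
  have hF : ∀ w ∈ Fil d k f k, ∃ v : K[X], d * v.natDegree < k ∧ w = AdjoinRoot.of _ v := by
    intro w hw
    unfold Fil at hw
    induction hw using Submodule.span_induction with
    | mem w hw =>
      obtain ⟨e, i, h, rfl⟩ := hw
      have hi : i = 0 := by
        rcases Nat.eq_zero_or_pos i with h' | h'
        · exact h'
        · have : k * 1 ≤ k * i := Nat.mul_le_mul_left _ h'
          omega
      subst hi
      exact ⟨X ^ e, by rw [natDegree_X_pow]; omega, by simp⟩
    | zero => exact ⟨0, by simp; omega, by simp⟩
    | add x y _ _ hx hy =>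
      obtain ⟨v, hv, rfl⟩ := hx
      obtain ⟨w, hw, rfl⟩ := hy
      refine ⟨v + w, ?_, by rw [map_add]⟩
      refine lt_of_le_of_lt (Nat.mul_le_mul_left d (natDegree_add_le v w)) ?_
      rcases max_choice v.natDegree w.natDegree with h | h <;> rw [h] <;> assumption
    | smul t x _ hx =>
      obtain ⟨v, hv, rfl⟩ := hx
      refine ⟨C t * v, lt_of_le_of_lt (Nat.mul_le_mul_left d (natDegree_C_mul_le t v)) hv, ?_⟩
      rw [map_mul, Algebra.smul_def, algMap_eq]
  obtain ⟨t, ht, e, i, h1, h2⟩ := hk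
  have hi : i = 1 := by
    rcases Nat.lt_trichotomy i 1 with h | h | h
    · exfalso
      have hi : i = 0 := by omega
      subst hi
      have : d ∣ k := ⟨e, by omega⟩
      have := Nat.dvd_gcd this dvd_rfl
      rw [hgcd] at this
      have := Nat.le_of_dvd one_pos this
      omega
    · exact h
    · exfalso
      have : k * 2 ≤ k * i := Nat.mul_le_mul_left _ h
      omega
  subst hi
  have he : e = 0 := by
    rcases Nat.eq_zero_or_pos e with h | h
    · exact h
    · have : 0 < d * e := Nat.mul_pos (by omega) h
      omega
  subst he
  obtain ⟨v, hv, hv2⟩ := hF _ h2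
  have hform : h = algebraMap K _ t * yy d f - AdjoinRoot.of _ (-v) := by
    rw [map_neg, ← hv2, Algebra.smul_def]; ring
  have hprod : ∏ z ∈ μ, sg z h
      = AdjoinRoot.of _ ((-1) ^ d * ((-v) ^ d - C t ^ d * f)) := by
    have : ∀ z ∈ μ, sg z h
        = algebraMap K _ z * (algebraMap K _ t * yy d f) - AdjoinRoot.of _ (-v) := by
      intro z hz
      rw [hsg z (hμd z hz), hform, map_sub, map_mul, sig_of, sig_yy, AlgHom.commutes]
      ring
    rw [Finset.prod_congr rfl this, prod_sub' hd hζ, mul_pow, yy_pow, algMap_eq]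
    simp only [map_mul, map_sub, map_pow, map_neg, map_one]
  have hinj : Function.Injective (AdjoinRoot.of ((X : K[X][X]) ^ d - C f)) := by
    apply AdjoinRoot.of.injective_of_degree_ne_zero
    rw [degree_X_pow_sub_C (by omega)]
    exact_mod_cast (by omega : d ≠ 0)
  rw [hprod, hub, algMap_eq, ← map_mul, ← map_pow (AdjoinRoot.of _) (X - C a)] at hu
  have hu' := hinj hu
  -- now pure polynomial algebra
  have hpm : ((-1 : K[X]) ^ d) * (-1) ^ d = 1 := by rw [← mul_pow]; simp
  set v' : K[X] := C t⁻¹ * (-v) with hv'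
  have hv'd : d * v'.natDegree < k := by
    refine lt_of_le_of_lt (Nat.mul_le_mul_left d (natDegree_C_mul_le _ _)) ?_
    rwa [natDegree_neg]
  have htt : (C t : K[X]) * C t⁻¹ = 1 := by rw [← C_mul, mul_inv_cancel₀ ht, C_1]
  have hbb : (C b : K[X]) * C b⁻¹ = 1 := by rw [← C_mul, mul_inv_cancel₀ hb, C_1]
  have hf1 : f = C (-(-1) ^ d * b⁻¹ * (t⁻¹) ^ d) * (X - C a) ^ k + v' ^ d := by
    have h3 : (C t : K[X]) ^ d * (C t⁻¹) ^ d = 1 := by rw [← mul_pow, htt, one_pow]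
    rw [hv', mul_pow]
    simp only [C_mul, C_neg, C_pow, C_1]
    rw [← hu']
    linear_combination (-f) * h3 + (C t⁻¹) ^ d * ((-v) ^ d - C t ^ d * f) * (hpm * (C b * C b⁻¹) + hbb)
  refine ⟨v', hv'd, ?_⟩
  have hvk : (v' ^ d).degree < k := by
    refine lt_of_le_of_lt degree_le_natDegree ?_
    refine lt_of_le_of_lt (Nat.cast_le.mpr (natDegree_pow_le)) ?_
    exact_mod_cast hv'd
  have hc1 : f.coeff k = 1 := by rw [← hdeg]; exact hmonic
  have hmk : ((X - C a) ^ k).Monic := (monic_X_sub_C a).pow k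
  have hnk : ((X - C a) ^ k).natDegree = k := by
    rw [(monic_X_sub_C a).natDegree_pow, natDegree_X_sub_C, mul_one]
  have hc2 := hmk.coeff_natDegree
  rw [hnk] at hc2
  have hlc := congrArg (fun g => coeff g k) hf1
  simp only [coeff_add, coeff_C_mul, hc1, hc2, coeff_eq_zero_of_degree_lt hvk, mul_one,
    add_zero] at hlc
  rw [← hlc, C_1, one_mul] at hf1
  exact hf1

lemma uniq_a [IsAlgClosed K] (hd : 2 ≤ d) (hdn : d < n) {ζ : K} (hζ : IsPrimitiveRoot ζ d)
    (hsqf : Squarefree f)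
    (hcase : (∃ p : ℕ, p.Prime ∧ ringChar K = p ∧ ∃ k : ℕ, n = p ^ k) ∨
      (ringChar K = 0 ∧ ¬ d ∣ (n - 1))) {a b : K} {v w : K[X]}
    (hv : d * v.natDegree < n) (hfv : f = (X - C a) ^ n + v ^ d)
    (hw : d * w.natDegree < n) (hfw : f = (X - C b) ^ n + w ^ d) : a = b := by
  by_contra hab
  have heq : (X - C a) ^ n - (X - C b) ^ n = w ^ d - v ^ d := by
    linear_combination hfw - hfv
  rcases hcase with ⟨p, hp, hchar, k, hk⟩ | ⟨hchar, hnd⟩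
  · have : Fact p.Prime := ⟨hp⟩
    have : CharP K p := by rw [← hchar]; exact ringChar.charP K
    have hconst : w ^ d - v ^ d = C ((b - a) ^ n) := by
      rw [← heq, hk, sub_pow_char_pow, sub_pow_char_pow, sub_pow_char_pow, C_sub, C_pow, C_pow]
      ring
    have hne : (b - a) ^ n ≠ 0 := pow_ne_zero _ (sub_ne_zero.mpr (Ne.symm hab))
    have hunit : IsUnit (w ^ d - v ^ d) := by
      rw [hconst]; exact isUnit_C.mpr hne.isUnit
    rw [← prod_sub (K := K) hd hζ w v] at hunit
    have hfac : ∀ z ∈ nthRootsFinset d (1 : K), IsUnit (w - C z * v) := fun z hz =>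
      isUnit_of_dvd_unit (Finset.dvd_prod_of_mem (fun z => w - algebraMap K K[X] z * v) hz) hunit
    have h1 := hfac 1 (by rw [mem_nthRootsFinset (by omega)]; simp)
    have h2 := hfac ζ (by rw [mem_nthRootsFinset (by omega)]; exact hζ.pow_eq_one)
    obtain ⟨r, _, hr⟩ := isUnit_iff.mp h1
    obtain ⟨s, _, hs⟩ := isUnit_iff.mp h2
    have hζ1 : ζ - 1 ≠ 0 := sub_ne_zero.mpr (hζ.ne_one (by omega))
    have hvc : v = C ((ζ - 1)⁻¹ * (r - s)) := by
      have h3 : C (ζ - 1) * v = C (r - s) := by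
        rw [C_sub, C_sub, hr, hs, C_1]; ring
      rw [C_mul, ← h3, ← mul_assoc, ← C_mul, inv_mul_cancel₀ hζ1, C_1, one_mul]
    obtain ⟨g, hg⟩ := IsAlgClosed.exists_pow_nat_eq (((ζ - 1)⁻¹ * (r - s)) ^ d)
      (show 0 < n by omega)
    have hf2 : f = (X - C (a - g)) ^ n := by
      rw [hfv, hvc, ← C_pow, ← hg]
      have : (X - C (a - g)) = (X - C a) + C g := by rw [C_sub]; ring
      rw [this, hk, add_pow_char_pow, C_pow]
    have := hsqf (X - C (a - g)) (by
      rw [hf2, ← pow_two]; exact pow_dvd_pow _ (by omega))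
    exact not_isUnit_X_sub_C _ this
  · have : CharP K 0 := by rw [← hchar]; exact ringChar.charP K
    have : CharZero K := CharP.charP_to_charZero K
    have hcoef : (w ^ d - v ^ d).coeff (n - 1) ≠ 0 := by
      rw [← heq, coeff_sub, sub_eq_add_neg X, sub_eq_add_neg X, ← C_neg, ← C_neg,
        coeff_X_add_C_pow, coeff_X_add_C_pow]
      have h1 : n - (n - 1) = 1 := by omega
      have h2 : n.choose (n - 1) = n := by
        rw [Nat.choose_symm (by omega : 1 ≤ n), Nat.choose_one_right]
      rw [h1, h2, pow_one, pow_one, ← sub_mul]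
      refine mul_ne_zero ?_ (by exact_mod_cast (by omega : n ≠ 0))
      intro h
      exact hab (by linear_combination -h)
    have aux : ∀ g : K[X], d * g.natDegree < n → (g ^ d).coeff (n - 1) = 0 := by
      intro g hg
      apply coeff_eq_zero_of_natDegree_lt
      rw [natDegree_pow]
      refine lt_of_le_of_ne (by omega) fun h => hnd ⟨_, h.symm⟩
    rw [coeff_sub, aux v hv, aux w hw, sub_zero] at hcoef
    exact hcoef rfl

lemma principal_conj (hd : 2 ≤ d) {a c z : K} (hz : z ^ d = 1) (k : ℕ)
    (h : (ptIdeal d f a c ^ k).IsPrincipal) : (ptIdeal d f a (z * c) ^ k).IsPrincipal := by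
  have hz0 : z ≠ 0 := by rintro rfl; rw [zero_pow (by omega)] at hz; exact zero_ne_one hz
  have hz' : (z⁻¹) ^ d = 1 := by rw [inv_pow, hz, inv_one]
  have e : (ptIdeal d f a c).map (sig d f z⁻¹ hz') = ptIdeal d f a (z * c) := by
    rw [map_pt, jj, ptIdeal, Ideal.span_insert, Ideal.span_insert]
    congr 1
    have h1 : algebraMap K (CurveRing K d f) z * algebraMap K _ z⁻¹ = 1 := by
      rw [← map_mul, mul_inv_cancel₀ hz0, map_one]
    apply le_antisymm <;> rw [Ideal.span_singleton_le_span_singleton]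
    · refine ⟨algebraMap K _ z⁻¹, ?_⟩
      rw [C_mul, map_mul, ← algMap_eq, ← algMap_eq]
      linear_combination (algebraMap K (CurveRing K d f) c) * h1
    · refine ⟨algebraMap K _ z, ?_⟩
      rw [C_mul, map_mul, ← algMap_eq, ← algMap_eq]
      linear_combination (-yy d f) * h1
  obtain ⟨g, hg⟩ := h.principal
  change _ = Ideal.span {g} at hg
  rw [← e, ← Ideal.map_pow, hg, Ideal.map_span, Set.image_singleton]
  exact ⟨_, rfl⟩

lemma tors_conj (hd : 2 ≤ d) {a c z : K} (hz : z ^ d = 1)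
    (h : IsTorsionOfOrder d f a c n) : IsTorsionOfOrder d f a (z * c) n := by
  have hz0 : z ≠ 0 := by rintro rfl; rw [zero_pow (by omega)] at hz; exact zero_ne_one hz
  refine ⟨⟨h.1.1, principal_conj hd hz n h.1.2⟩, ?_⟩
  rintro k ⟨hk, hp⟩
  refine h.2 ⟨hk, ?_⟩
  have := principal_conj hd (z := z⁻¹) (by rw [inv_pow, hz, inv_one]) k hp
  rwa [inv_mul_cancel_left₀ hz0] at this

end CurveAux

theorem stmt_8 {K : Type*} [Field K] [IsAlgClosed K] (d n : ℕ)
    (hd : 2 ≤ d) (hdn : d < n) (hgcd : Nat.gcd n d = 1)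
    (hchar : ¬ (ringChar K ∣ d))
    (f : K[X]) (hmonic : f.Monic) (hdeg : f.natDegree = n) (hsqf : Squarefree f)
    (hDed : IsDedekindDomain (CurveRing K d f))
    (hcase : (∃ p : ℕ, p.Prime ∧ ringChar K = p ∧ ∃ k : ℕ, n = p ^ k) ∨
      (ringChar K = 0 ∧ ¬ d ∣ (n - 1))) :
    {P : K × K | P.2 ^ d = f.eval P.1 ∧ IsTorsionOfOrder d f P.1 P.2 n}.ncard = 0 ∨
    {P : K × K | P.2 ^ d = f.eval P.1 ∧ IsTorsionOfOrder d f P.1 P.2 n}.ncard = d := by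
  classical
  have : NeZero (d : K) := ⟨fun h => hchar ((ringChar.spec K d).mp h)⟩
  obtain ⟨ζ, hζ⟩ := HasEnoughRootsOfUnity.exists_primitiveRoot K d
  have : IsDomain (CurveRing K d f) := hDed.toIsDomain
  set T := {P : K × K | P.2 ^ d = f.eval P.1 ∧ IsTorsionOfOrder d f P.1 P.2 n} with hT
  have hkey : ∀ P ∈ T, ∃ v : K[X], d * v.natDegree < n ∧ f = (X - C P.1) ^ n + v ^ d :=
    fun P hP => CurveAux.key hd hζ hdn hgcd hmonic hdeg hsqf hP.1 hP.2.1.2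
  rcases T.eq_empty_or_nonempty with hE | ⟨⟨a, c⟩, hP⟩
  · left; rw [hE, Set.ncard_empty]
  right
  obtain ⟨v, hv, hfv⟩ := hkey _ hP
  have hc0 : c ≠ 0 := by
    rintro rfl
    have h0 : f.eval a = 0 := by rw [← hP.1]; exact zero_pow (by omega)
    have hva : v.IsRoot a := by
      rw [hfv] at h0
      simp only [eval_add, eval_pow, eval_sub, eval_X, eval_C, sub_self,
        zero_pow (show n ≠ 0 by omega), zero_add] at h0
      exact pow_eq_zero_iff (by omega : d ≠ 0) |>.mp h0
    have hdv : X - C a ∣ v := dvd_iff_isRoot.mpr hva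
    have : (X - C a) * (X - C a) ∣ f := by
      rw [hfv, ← pow_two]
      exact dvd_add (pow_dvd_pow _ (by omega))
        ((pow_dvd_pow _ hd).trans (pow_dvd_pow_of_dvd hdv d))
    exact not_isUnit_X_sub_C a (hsqf _ this)
  have hTeq : T = ((nthRootsFinset d (1 : K)).image fun z => (a, z * c) : Finset (K × K)) := by
    ext ⟨b, e⟩
    rw [Finset.coe_image, Set.mem_image]
    constructor
    · intro hQ
      obtain ⟨w, hw, hfw⟩ := hkey _ hQ
      have hab : a = b := CurveAux.uniq_a hd hdn hζ hsqf hcase hv hfv hw hfw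
      subst hab
      refine ⟨e / c, ?_, by rw [div_mul_cancel₀ _ hc0]⟩
      rw [Finset.mem_coe, mem_nthRootsFinset (by omega), div_pow]
      have h1 : e ^ d = f.eval a := hQ.1
      have h2 : c ^ d = f.eval a := hP.1
      rw [h1, ← h2, div_self (pow_ne_zero _ hc0)]
    · rintro ⟨z, hz, hze⟩
      rw [Finset.mem_coe, mem_nthRootsFinset (by omega)] at hz
      rw [← hze]
      refine ⟨?_, CurveAux.tors_conj hd hz hP.2⟩
      show (z * c) ^ d = f.eval a
      rw [mul_pow, hz, one_mul]
      exact hP.1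
  rw [hTeq, Set.ncard_coe_finset, Finset.card_image_of_injective, hζ.card_nthRootsFinset]
  intro z w h
  exact mul_right_cancel₀ hc0 (Prod.ext_iff.mp h).2
end

section
/- Let K be a field of characteristic 0 and let d ≥ 2 and n > d be integers such that d does not divide n − 1. If x₀, x₁ ∈ K and v₀, v₁ ∈ K[X] are polynomials with d·deg(vᵢ) ≤ n − 1 (i = 0,1) satisfying (X − x₀)^n + v₀(X)^d = (X − x₁)^n + v₁(X)^d in K[X], then x₀ = x₁. -/
open Polynomial

theorem stmt_10 {K : Type*} [Field K] [CharZero K] (d n : ℕ)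
    (hd : 2 ≤ d) (hdn : d < n) (hndvd : ¬ d ∣ (n - 1))
    (x₀ x₁ : K) (v₀ v₁ : K[X])
    (hv₀ : d * v₀.natDegree ≤ n - 1) (hv₁ : d * v₁.natDegree ≤ n - 1)
    (heq : (X - C x₀) ^ n + v₀ ^ d = (X - C x₁) ^ n + v₁ ^ d) :
    x₀ = x₁ := by
  have key : ∀ v : K[X], d * v.natDegree ≤ n - 1 → (v ^ d).coeff (n - 1) = 0 := by
    intro v hv
    apply coeff_eq_zero_of_natDegree_lt
    rw [natDegree_pow]
    exact lt_of_le_of_ne hv (fun h => hndvd ⟨_, h.symm⟩)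
  obtain ⟨m, rfl⟩ : ∃ m, n = m + 1 := ⟨n - 1, by omega⟩
  have hc : ∀ x : K, ((X - C x) ^ (m + 1)).coeff m = -x * ((m : K) + 1) := by
    intro x
    rw [sub_eq_add_neg, ← C_neg, coeff_X_add_C_pow]
    simp
  have h := congrArg (fun p => coeff p m) heq
  have h0 := key v₀ hv₀
  have h1 := key v₁ hv₁
  simp only [Nat.add_sub_cancel] at h0 h1
  simp only [coeff_add, hc, h0, h1, add_zero] at h
  have hm : (m : K) + 1 ≠ 0 := Nat.cast_add_one_ne_zero m
  exact neg_injective (mul_right_cancel₀ hm h)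
end
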